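/- Let Φ = D_n, let I, J ⊆ Δ, and let λ be an integral Φ_I-regular weight with Φ_{λ̄} = Φ_J. Suppose that for some 1 ≤ i ≤ n the weight s_{e_i}λ is Φ_I-regular and λ ⟷̸ s_{e_i}λ. If n̄_{m̄} ≠ 0 and (n_m, n̄_{m̄}) ≠ (m̄, m), then (Φ, Φ_I, Φ_J) is strongly separable. -/

import Mathlib

namespace JantzenBlocks

open scoped Classical

/-- The three classical types `B`, `C`, `D`. -/
inductive CType : Type
  | B | C | D
deriving DecidableEq

/-- The weight space `ℝ^n`. -/
abbrev V (n : ℕ) := Fin n → ℝ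

noncomputable section

/-- The standard inner product on `ℝ^n`. -/
def inn {n : ℕ} (x y : V n) : ℝ := ∑ i, x i * y i

/-- The standard basis vector `e i`. -/
def ee {n : ℕ} (i : Fin n) : V n := Pi.single i 1

/-- The reflection `s_v` in the vector `v`. -/
def sRefl {n : ℕ} (v x : V n) : V n := x - (2 * inn x v / inn v v) • v

/-- The roots `±e_i ± e_j` (`i ≠ j`), i.e. the root system of type `D_n`. -/
def DRoots (n : ℕ) : Set (V n) :=
  {v | ∃ i j : Fin n, i ≠ j ∧ (v = ee i + ee j ∨ v = ee i - ee j ∨ v = -ee i - ee j)}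

/-- The ambient root system `Φ` of type `B_n`, `C_n` or `D_n`. -/
def Phi (n : ℕ) : CType → Set (V n)
  | CType.B => DRoots n ∪ {v | ∃ i : Fin n, v = ee i ∨ v = -ee i}
  | CType.C => DRoots n ∪ {v | ∃ i : Fin n, v = (2:ℝ) • ee i ∨ v = -((2:ℝ) • ee i)}
  | CType.D => DRoots n

/-- The standard positive system `Φ⁺`: roots whose first nonzero coordinate is positive. -/
def PhiPos (n : ℕ) (ct : CType) : Set (V n) :=
  {v | v ∈ Phi n ct ∧ ∃ i : Fin n, 0 < v i ∧ ∀ j : Fin n, j < i → v j = 0}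

/-- The simple root `α_{i+1}` (`0`-based index `i`). -/
def alphaR (n : ℕ) (ct : CType) (i : Fin n) : V n :=
  if h : i.1 + 1 < n then ee i - ee ⟨i.1 + 1, h⟩
  else
    match ct with
    | CType.B => ee i
    | CType.C => (2:ℝ) • ee i
    | CType.D => ee ⟨n - 2, Nat.sub_lt i.pos (by norm_num)⟩ + ee i

/-- The subsystem `Φ_I` generated by the simple roots indexed by `I`. -/
def PhiI (n : ℕ) (ct : CType) (I : Finset (Fin n)) : Set (V n) :=
  Phi n ct ∩ (Submodule.span ℝ (alphaR n ct '' (I : Set (Fin n))) : Set (V n))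

/-- `λ` is `Φ_I`-regular. -/
def RegI (n : ℕ) (ct : CType) (I : Finset (Fin n)) (lam : V n) : Prop :=
  ∀ β ∈ PhiI n ct I, inn lam β ≠ 0

/-- `λ` is integral. -/
def IntegralW (n : ℕ) (ct : CType) (lam : V n) : Prop :=
  ∀ β ∈ Phi n ct, ∃ k : ℤ, 2 * inn lam β / inn β β = (k : ℝ)

/-- `λ` is dominant. -/
def DominantW (n : ℕ) (ct : CType) (lam : V n) : Prop :=
  ∀ i : Fin n, 0 ≤ inn lam (alphaR n ct i)

/-- `μ` lies in the `W_I`-orbit of `λ` (`W_I` generated by the reflections `s_α`, `α ∈ I`). -/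
def WIOrb (n : ℕ) (ct : CType) (I : Finset (Fin n)) : V n → V n → Prop :=
  Relation.ReflTransGen (fun x y => ∃ i ∈ I, y = sRefl (alphaR n ct i) x)

/-- `μ` lies in the `W`-orbit of `λ`. -/
def WOrb (n : ℕ) (ct : CType) : V n → V n → Prop := WIOrb n ct Finset.univ

/-- `λ ∈ Λ_I⁺`. -/
def LamIPlus (n : ℕ) (ct : CType) (I : Finset (Fin n)) (lam : V n) : Prop :=
  IntegralW n ct lam ∧ ∀ i ∈ I, 0 < inn lam (alphaR n ct i)

/-- The sorted list `q_1 < q_2 < … < q_{m-1}` (`1`-based values) of indices of `Δ∖I`. -/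
def Qlist (n : ℕ) (I : Finset (Fin n)) : List ℕ :=
  ((Finset.univ \ I).sort (· ≤ ·)).map (fun j => j.1 + 1)

/-- The number `m` of segments determined by `I`. -/
def mval (n : ℕ) (I : Finset (Fin n)) : ℕ := (Qlist n I).length + 1

/-- `q_s`, with the conventions `q_0 = 0` and `q_m = n`. -/
def qval (n : ℕ) (I : Finset (Fin n)) (s : ℕ) : ℕ :=
  if s = 0 then 0 else if s < mval n I then (Qlist n I).getD (s - 1) 0 else n

/-- `I` is standard (automatic in types `B`, `C`). -/
def StandardI (n : ℕ) (ct : CType) (I : Finset (Fin n)) : Prop :=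
  ct = CType.D → ∀ h : 2 ≤ n,
    ((⟨n - 2, by omega⟩ : Fin n) ∈ I ∨ (⟨n - 1, by omega⟩ : Fin n) ∉ I)

/-- `q_s`, corrected for nonstandard `I` (where `q_{m-1}` is replaced by `n`,
so that the `(m-1)`-st segment is `(q_{m-2}, n]` and the `m`-th segment is empty). -/
def qv (n : ℕ) (ct : CType) (I : Finset (Fin n)) (s : ℕ) : ℕ :=
  if ¬ StandardI n ct I ∧ s = mval n I - 1 then n else qval n I s

/-- The segment length `n_s`. -/
def nsval (n : ℕ) (ct : CType) (I : Finset (Fin n)) (s : ℕ) : ℕ :=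
  qv n ct I s - qv n ct I (s - 1)

/-- The (`0`-based) index `i` lies in the `s`-th segment, i.e. `q_{s-1} < i+1 ≤ q_s`. -/
def InSeg (n : ℕ) (ct : CType) (I : Finset (Fin n)) (s : ℕ) (i : Fin n) : Prop :=
  qv n ct I (s - 1) < i.1 + 1 ∧ i.1 + 1 ≤ qv n ct I s

/-- `n_s^λ(a)`: the number of entries of the `s`-th segment of `λ` with absolute value `a`. -/
def nsl (n : ℕ) (ct : CType) (I : Finset (Fin n)) (lam : V n) (s : ℕ) (a : ℝ) : ℕ :=
  (Finset.univ.filter (fun i : Fin n => InSeg n ct I s i ∧ |lam i| = a)).card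

/-- `a_t = λ̄_{q̄_t}` for `1 ≤ t < m̄`, and `a_{m̄} = 0`. -/
def aval (n : ℕ) (ct : CType) (J : Finset (Fin n)) (lbar : V n) (t : ℕ) : ℝ :=
  if t < mval n J then
    (if h : qv n ct J t - 1 < n then lbar ⟨qv n ct J t - 1, h⟩ else 0)
  else 0

/-- `n_s^λ(a)` is maximal among all `Φ_I`-regular weights in the orbit of `λ`. -/
def IsMaxN (n : ℕ) (ct : CType) (I : Finset (Fin n)) (lam : V n) (s : ℕ) (a : ℝ) : Prop :=
  ∀ mu : V n, WOrb n ct lam mu → RegI n ct I mu →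
    nsl n ct I mu s a ≤ nsl n ct I lam s a

/-- The exceptional configurations of Proposition 4.7 (types `B` and `C`, with
`shortR i` the short/long root `e_i` resp. `2e_i`). -/
def ExcBC (n : ℕ) (ct : CType) (I : Finset (Fin n)) (shortR : Fin n → V n)
    (lam β : V n) : Prop :=
  ∃ s : ℕ, 1 ≤ s ∧ s < mval n I ∧ ∃ a : ℝ, 0 < a ∧
    nsl n ct I lam s a = 1 ∧
    nsl n ct I lam s 0 + nsl n ct I lam (mval n I) a = 1 ∧
    ((∃ i j : Fin n, InSeg n ct I s i ∧ InSeg n ct I s j ∧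
        |lam i| = a ∧ lam j = 0 ∧ (β = shortR i ∨ β = ee i + ee j)) ∨
     (∃ i j : Fin n, InSeg n ct I s i ∧ InSeg n ct I (mval n I) j ∧
        ((lam i = a ∧ lam j = a) ∨ (lam i = -a ∧ lam j = -a)) ∧
        (β = shortR i ∨ β = ee i + ee j)) ∨
     (∃ i j : Fin n, InSeg n ct I s i ∧ InSeg n ct I (mval n I) j ∧
        ((lam i = a ∧ lam j = -a) ∨ (lam i = -a ∧ lam j = a)) ∧
        (β = shortR i ∨ β = ee i - ee j)))

/-- The exceptional configurations of Proposition 4.7 (type `D`). -/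
def ExcD (n : ℕ) (I : Finset (Fin n)) (lam β : V n) : Prop :=
  ∃ s : ℕ, 1 ≤ s ∧ s < mval n I ∧ ∃ a : ℝ, 0 < a ∧
    nsl n CType.D I lam s a = 1 ∧ nsl n CType.D I lam (mval n I) a = 1 ∧
    nsl n CType.D I lam s 0 = 1 ∧ nsl n CType.D I lam (mval n I) 0 = 1 ∧
    ∃ i j k l : Fin n, InSeg n CType.D I s i ∧ InSeg n CType.D I s j ∧
      InSeg n CType.D I (mval n I) k ∧ InSeg n CType.D I (mval n I) l ∧
      lam j = 0 ∧ lam l = 0 ∧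
      ((((lam i = a ∧ lam k = a) ∨ (lam i = -a ∧ lam k = -a)) ∧
          (β = ee i + ee j ∨ β = ee i + ee k)) ∨
       (((lam i = a ∧ lam k = -a) ∨ (lam i = -a ∧ lam k = a)) ∧
          (β = ee i + ee j ∨ β = ee i - ee k)))

/-- The exceptional configurations in which `β` fails to be a linked root. -/
def Exc (n : ℕ) (ct : CType) (I : Finset (Fin n)) (lam β : V n) : Prop :=
  match ct with
  | CType.B => ExcBC n CType.B I (fun i => ee i) lam β
  | CType.C => ExcBC n CType.C I (fun i => (2:ℝ) • ee i) lam β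
  | CType.D => ExcD n I lam β

/-- `β` is a linked root of the `Φ_I`-regular weight `λ` (for standard `I`). -/
def PlainLinked (n : ℕ) (ct : CType) (I : Finset (Fin n)) (lam β : V n) : Prop :=
  RegI n ct I lam ∧ β ∈ PhiPos n ct ∧ β ∉ PhiI n ct I ∧
  RegI n ct I (sRefl β lam) ∧ sRefl β lam ≠ lam ∧ ¬ Exc n ct I lam β

/-- The transposition of the last two indices. -/
def swapLast (n : ℕ) (j : Fin n) : Fin n :=
  if j.1 = n - 1 then ⟨n - 2, Nat.sub_lt j.pos (by norm_num)⟩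
  else if j.1 = n - 2 then ⟨n - 1, Nat.sub_lt j.pos (by norm_num)⟩
  else j

/-- The isomorphism `φ = s_{e_n}` (negating the last coordinate). -/
def phiW {n : ℕ} (x : V n) : V n := fun j => if j.1 = n - 1 then -x j else x j

/-- The image `φ(I)` of an index set under `φ` (interchanging `α_{n-1}` and `α_n`). -/
def phiIdx (n : ℕ) (I : Finset (Fin n)) : Finset (Fin n) := I.image (swapLast n)

/-- `β` is a linked root of `λ`; for nonstandard `I` the notion is transported along `φ`. -/
def LinkedRoot (n : ℕ) (ct : CType) (I : Finset (Fin n)) (lam β : V n) : Prop :=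
  if StandardI n ct I then PlainLinked n ct I lam β
  else PlainLinked n ct (phiIdx n I) (phiW lam) (phiW β)

/-- One step in a connecting chain: `y ∈ W_I x`, or `y = w s_β x` for a linked root `β` of `x`. -/
def ConnStep (n : ℕ) (ct : CType) (I : Finset (Fin n)) (x y : V n) : Prop :=
  RegI n ct I x ∧ RegI n ct I y ∧
  (WIOrb n ct I x y ∨ ∃ β : V n, LinkedRoot n ct I x β ∧ WIOrb n ct I (sRefl β x) y)

/-- `λ ⟷ μ`: `λ` and `μ` are connected by a chain of linked roots. -/
def Conn (n : ℕ) (ct : CType) (I : Finset (Fin n)) (lam mu : V n) : Prop :=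
  RegI n ct I lam ∧ RegI n ct I mu ∧
  Relation.ReflTransGen (ConnStep n ct I) lam mu

/-- The set `^IW^Jλ̄ = Wλ̄ ∩ Λ_I⁺` of weights parametrizing the simple modules. -/
def IWJset (n : ℕ) (ct : CType) (I : Finset (Fin n)) (lbar : V n) : Set (V n) :=
  {mu | WOrb n ct lbar mu ∧ LamIPlus n ct I mu}

/-- `(S, S̄)` is a separable pair for the weight `λ`. -/
def IsSepPair (n : ℕ) (ct : CType) (I J : Finset (Fin n)) (lbar lam : V n)
    (S Sb : Finset ℕ) : Prop :=
  S.Nonempty ∧ Sb.Nonempty ∧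
  S ⊆ Finset.Icc 1 (mval n I) ∧ Sb ⊆ Finset.Icc 1 (mval n J) ∧
  1 < mval n I ∧ 1 < mval n J ∧
  (∀ s ∈ S, ∀ t ∈ Sb, IsMaxN n ct I lam s (aval n ct J lbar t)) ∧
  (∀ s ∈ Finset.Icc 1 (mval n I), s ∉ S →
     ∀ t ∈ Finset.Icc 1 (mval n J), t ∉ Sb →
       nsl n ct I lam s (aval n ct J lbar t) = 0) ∧
  (match ct with
   | CType.B => (mval n I ∈ S ↔ mval n J ∉ Sb)
   | CType.C => (mval n I ∈ S ↔ mval n J ∉ Sb)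
   | CType.D => (mval n I ∈ S ↔ mval n J ∈ Sb))

/-- `𝒟`: the set of separable pairs of the system `(Φ, Φ_I, Φ_J)`. -/
def DSet (n : ℕ) (ct : CType) (I J : Finset (Fin n)) (lbar : V n) :
    Set (Finset ℕ × Finset ℕ) :=
  {p | ∀ lam ∈ IWJset n ct I lbar, IsSepPair n ct I J lbar lam p.1 p.2}

/-- The four weakly separable pairs. -/
def IsWeakPair (n : ℕ) (I J : Finset (Fin n)) (p : Finset ℕ × Finset ℕ) : Prop :=
  p = (Finset.Icc 1 (mval n I - 1), {mval n J}) ∨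
  p = (Finset.Icc 1 (mval n I), {mval n J}) ∨
  p = ({mval n I}, Finset.Icc 1 (mval n J - 1)) ∨
  p = ({mval n I}, Finset.Icc 1 (mval n J))

/-- The system `(Φ, Φ_I, Φ_J)` is separable. -/
def SepSys (n : ℕ) (ct : CType) (I J : Finset (Fin n)) (lbar : V n) : Prop :=
  (DSet n ct I J lbar).Nonempty

/-- The system `(Φ, Φ_I, Φ_J)` is strongly separable. -/
def StronglySepSys (n : ℕ) (ct : CType) (I J : Finset (Fin n)) (lbar : V n) : Prop :=
  ∃ p ∈ DSet n ct I J lbar, ¬ IsWeakPair n I J p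

/-- The system `(Φ, Φ_I, Φ_J)` is weakly separable. -/
def WeaklySepSys (n : ℕ) (ct : CType) (I J : Finset (Fin n)) (lbar : V n) : Prop :=
  SepSys n ct I J lbar ∧ ∀ p ∈ DSet n ct I J lbar, IsWeakPair n I J p

/-- The partial ordering on separable pairs: `(S₁,S̄₁) ≤ (S₂,S̄₂)` iff `S₁ ⊆ S₂`, `S̄₁ ⊇ S̄₂`. -/
def pairLE (p q : Finset ℕ × Finset ℕ) : Prop := p.1 ⊆ q.1 ∧ q.2 ⊆ p.2

/-- Strict version of `pairLE`. -/
def pairLT (p q : Finset ℕ × Finset ℕ) : Prop := pairLE p q ∧ p ≠ q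

/-- The generating relations of the equivalence `∼` on `𝒟`. -/
def PairRel (D : Set (Finset ℕ × Finset ℕ)) (p q : Finset ℕ × Finset ℕ) : Prop :=
  p ∈ D ∧ q ∈ D ∧ ((p.2 = q.2 ∧ p.1 ⊆ q.1) ∨ (p.1 = q.1 ∧ p.2 ⊆ q.2))

/-- The equivalence relation `∼` on separable pairs. -/
def PairEquiv (D : Set (Finset ℕ × Finset ℕ)) :
    Finset ℕ × Finset ℕ → Finset ℕ × Finset ℕ → Prop :=
  Relation.EqvGen (PairRel D)

/-- A trivial separable pair. -/
def TrivialPair (n : ℕ) (ct : CType) (I J : Finset (Fin n)) (lbar : V n)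
    (p : Finset ℕ × Finset ℕ) : Prop :=
  match ct with
  | CType.B | CType.C =>
    (∃ s0 : ℕ, 1 ≤ s0 ∧ s0 < mval n I ∧
       PairEquiv (DSet n ct I J lbar) p ({s0}, Finset.Icc 1 (mval n J))) ∨
    (∃ t0 : ℕ, 1 ≤ t0 ∧ t0 < mval n J ∧
       PairEquiv (DSet n ct I J lbar) p (Finset.Icc 1 (mval n I), {t0}))
  | CType.D =>
    (∃ s0 : ℕ, 1 ≤ s0 ∧ s0 < mval n I ∧
       PairEquiv (DSet n ct I J lbar) p ({s0}, Finset.Icc 1 (mval n J - 1))) ∨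
    (∃ t0 : ℕ, 1 ≤ t0 ∧ t0 < mval n J ∧
       PairEquiv (DSet n ct I J lbar) p (Finset.Icc 1 (mval n I - 1), {t0}))

/-- The set of blocks: equivalence classes of `^IW^Jλ̄` under `⟷`. -/
def BlockSet (n : ℕ) (ct : CType) (I : Finset (Fin n)) (lbar : V n) : Set (Set (V n)) :=
  {Cl | ∃ lam ∈ IWJset n ct I lbar,
     Cl = {mu | mu ∈ IWJset n ct I lbar ∧ Conn n ct I lam mu}}

/-- The parity `P(λ)` of the number of negative entries of `λ`. -/
def Pfun (n : ℕ) (lam : V n) : ℕ :=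
  (Finset.univ.filter (fun i : Fin n => lam i < 0)).card % 2

/-- A fundamental chain `c 1 ∼ c 2 ∼ … ∼ c k` in `𝒟`. -/
def IsFundChain (D : Set (Finset ℕ × Finset ℕ)) (c : ℕ → Finset ℕ × Finset ℕ)
    (k : ℕ) : Prop :=
  1 ≤ k ∧ (∀ i, 1 ≤ i → i ≤ k → c i ∈ D) ∧
  (∀ i, 1 ≤ i → i < k →
     ((c i).1 = (c (i+1)).1 ∨ (c i).2 = (c (i+1)).2) ∧
     (pairLT (c i) (c (i+1)) ∨ pairLT (c (i+1)) (c i)))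

/-- The list of parts of the partition `π_I`. -/
def piParts (n : ℕ) (ct : CType) (I : Finset (Fin n)) : List ℕ :=
  (List.range (mval n I - 1)).map (fun s => nsval n ct I (s+1)) ++
  (List.range (mval n I - 1)).map (fun s => nsval n ct I (s+1)) ++
  (match ct with
   | CType.B => [2 * nsval n ct I (mval n I) + 1]
   | CType.C => [2 * nsval n ct I (mval n I)]
   | CType.D => if nsval n ct I (mval n I) = 0 then []
                else [2 * nsval n ct I (mval n I) - 1, 1])

/-- The `i`-th part (`1`-based) of the partition with list of parts `L`. -/
def partAt (L : List ℕ) (i : ℕ) : ℕ :=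
  (L.mergeSort (fun a b => decide (b ≤ a))).getD (i - 1) 0

/-- The `i`-th part (`1`-based) of the dual partition `π^t`: the number of parts `≥ i`. -/
def dualAt (L : List ℕ) (i : ℕ) : ℕ :=
  (L.filter (fun x => decide (i ≤ x))).length

/-- `k` is compatible with the system `(Φ, Φ_I, Φ_J)`. -/
def CompatibleK (n : ℕ) (ct : CType) (I J : Finset (Fin n)) (k : ℕ) : Prop :=
  1 ≤ k ∧ k ≤ 2 * mval n I - 1 ∧
  (match ct with
   | CType.B =>
     (Odd k ∧ k ≤ partAt (piParts n CType.B J) 2 ∧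
        2 * nsval n CType.B J (mval n J) + 1 ≤ k ∧
        partAt (piParts n CType.B I) k ≤ 2 * nsval n CType.B I (mval n I) + 1) ∨
     (Even k ∧ k ≤ 2 * nsval n CType.B J (mval n J) ∧
        2 * nsval n CType.B I (mval n I) + 1 ≤ partAt (piParts n CType.B I) k)
   | CType.C =>
     (Odd k ∧ k ≤ partAt (piParts n CType.C J) 2 ∧
        2 * nsval n CType.C J (mval n J) + 1 ≤ k ∧
        partAt (piParts n CType.C I) k ≤ 2 * nsval n CType.C I (mval n I)) ∨
     (Even k ∧ k ≤ 2 * nsval n CType.C J (mval n J) ∧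
        2 * nsval n CType.C I (mval n I) + 1 ≤ partAt (piParts n CType.C I) k)
   | CType.D =>
     (Even k ∧ k ≤ partAt (piParts n CType.D J) 2 ∧
        2 * nsval n CType.D J (mval n J) ≤ k ∧
        2 * nsval n CType.D I (mval n I) ≤ partAt (piParts n CType.D I) k) ∨
     (Odd k ∧ k ≤ 2 * nsval n CType.D J (mval n J) - 1 ∧
        partAt (piParts n CType.D I) k ≤ 2 * nsval n CType.D I (mval n I) - 1))

/-- `s_{e_{k_1}}^{ε_1} ⋯ s_{e_{k_r}}^{ε_r} μ`. -/
def applyFlips (n : ℕ) (ks : ℕ → Fin n) (eps : ℕ → Bool) : ℕ → V n → V n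
  | 0, v => v
  | (r+1), v =>
      if eps (r+1) then sRefl (ee (ks (r+1))) (applyFlips n ks eps r v)
      else applyFlips n ks eps r v

end


/-! ### Abstract core -/

section Core

def occ {n : ℕ} (seg : Fin n → ℕ) (x : V n) (s : ℕ) (t : ℝ) : Prop :=
  ∃ i, seg i = s ∧ |x i| = t

def room {n : ℕ} (seg : Fin n → ℕ) (m : ℕ) (x : V n) (s : ℕ) (t : ℝ) : Prop :=
  (s ≠ m ∧ ∃ v : ℝ, |v| = t ∧ ∀ i, seg i = s → x i ≠ v) ∨
  (s = m ∧ ∀ i, seg i = s → |x i| ≠ t)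

def Reg {n : ℕ} (seg : Fin n → ℕ) (m : ℕ) (x : V n) : Prop :=
  ∀ i j, i ≠ j → seg i = seg j → x i ≠ x j ∧ (seg i = m → x i ≠ - x j)

def flip {n : ℕ} (i : Fin n) (x : V n) : V n := fun k => if k = i then - x k else x k

def op {n : ℕ} (i j : Fin n) (e : ℝ) (x : V n) : V n :=
  fun k => if k = i then e * x j else if k = j then e * x i else x k

def single {n : ℕ} (seg : Fin n → ℕ) (x : V n) (i : Fin n) : Prop :=
  ∀ j, j ≠ i → seg j = seg i → |x j| ≠ |x i|

structure Moves {n : ℕ} (seg : Fin n → ℕ) (m : ℕ) (C : V n → V n → Prop) : Prop where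
  symm : ∀ x y, C x y → C y x
  trans : ∀ x y z, C x y → C y z → C x z
  ex : ∀ x i j e, (e = 1 ∨ e = -1) → seg i ≠ seg j → |x i| ≠ |x j| → Reg seg m x →
    Reg seg m (op i j e x) → C x (op i j e x)
  perm : ∀ x i j, seg i = seg j → i ≠ j → Reg seg m x → C x (op i j 1 x)
  fl : ∀ x i j, seg i ≠ seg j → seg i ≠ m → seg j ≠ m → |x i| = |x j| → x i ≠ 0 → Reg seg m x →
    Reg seg m (flip i (flip j x)) → C x (flip i (flip j x))
  flm : ∀ x i j, seg i ≠ m → seg j = m → |x i| = |x j| → x i ≠ 0 →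
    ¬ (occ seg x (seg i) 0 ∧ occ seg x m 0) → Reg seg m x →
    Reg seg m (flip i (flip j x)) → C x (flip i (flip j x))
  inn : ∀ x i j, seg i = seg j → seg i ≠ m → i ≠ j → |x i| ≠ |x j| → x i ≠ 0 → x j ≠ 0 →
    Reg seg m x → Reg seg m (flip i (flip j x)) → C x (flip i (flip j x))
  in0 : ∀ x i j, seg i = seg j → seg i ≠ m → x i ≠ 0 → x j = 0 →
    ¬ (occ seg x m 0 ∧ occ seg x m |x i|) → Reg seg m x → Reg seg m (flip i x) → C x (flip i x)
  mm : ∀ x i j, seg i = m → seg j = m → i ≠ j → Reg seg m x → C x (flip i (flip j x))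

variable {n : ℕ} {seg : Fin n → ℕ} {m : ℕ} {C : V n → V n → Prop}

theorem abs_flip (i : Fin n) (x : V n) (k : Fin n) : |flip i x k| = |x k| := by
  unfold flip; split_ifs <;> simp

theorem flip_flip (i : Fin n) (x : V n) : flip i (flip i x) = x := by
  funext k; unfold flip; split_ifs <;> simp

theorem flip_comm (i j : Fin n) (x : V n) : flip i (flip j x) = flip j (flip i x) := by
  funext k; unfold flip; split_ifs <;> simp

theorem flip_zero (i : Fin n) (x : V n) (h : x i = 0) : flip i x = x := by
  funext k; unfold flip; split_ifs with hk <;> simp [hk, h]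

theorem occ_flip (i : Fin n) (x : V n) (s : ℕ) (t : ℝ) : occ seg (flip i x) s t ↔ occ seg x s t := by
  simp [occ, abs_flip]

theorem single_flip (i k : Fin n) (x : V n) : single seg (flip i x) k ↔ single seg x k := by
  simp [single, abs_flip]

theorem Reg.flip {x : V n} (h : Reg seg m x) {i : Fin n} (hs : single seg x i) :
    Reg seg m (flip i x) := by
  intro a b hab hseg
  have h0 := h a b hab hseg
  unfold JantzenBlocks.flip
  by_cases ha : a = i
  · subst ha
    have hb : b ≠ a := fun h => hab h.symm
    have h1 := hs b hb hseg.symm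
    simp only [if_true, hb, if_false]
    constructor
    · intro h2; apply h1; rw [← h2, abs_neg]
    · intro _ h2; apply h1; rw [neg_inj.mp h2]
  · by_cases hb : b = i
    · subst hb
      have h1 := hs a ha hseg
      simp only [if_true, ha, if_false]
      constructor
      · intro h2; apply h1; rw [h2, abs_neg]
      · intro _ h2; apply h1; rw [h2, neg_neg]
    · simpa [ha, hb] using h0

theorem single_of_reg_flip {x : V n} {i : Fin n} (h : Reg seg m x) (h' : Reg seg m (flip i x))
    (_h0 : x i ≠ 0) : single seg x i := by
  intro j hj hseg he
  rcases abs_eq_abs.mp he with h1 | h1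
  · exact (h j i hj hseg).1 h1
  · have := (h' j i hj hseg).1
    simp [JantzenBlocks.flip, hj, h1] at this

theorem single_m {x : V n} {i : Fin n} (h : Reg seg m x) (hi : seg i = m) : single seg x i := by
  intro j hj hseg he
  rcases abs_eq_abs.mp he with h1 | h1
  · exact (h j i hj hseg).1 h1
  · exact (h j i hj hseg).2 (hseg.trans hi) h1

/-- room for the value of a single entry -/
theorem room_of_single {x : V n} {i : Fin n} (hi : seg i ≠ m) (h0 : x i ≠ 0)
    (hs : single seg x i) : room seg m x (seg i) |x i| := by
  refine Or.inl ⟨hi, - x i, abs_neg _, fun j hj he => ?_⟩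
  by_cases hji : j = i
  · subst hji; apply h0; linarith
  · exact hs j hji hj (by rw [he, abs_neg])

/-- an entry is single in a row with room -/
theorem single_of_room {x : V n} {i : Fin n} (h : Reg seg m x)
    (hr : room seg m x (seg i) |x i|) : single seg x i := by
  intro j hj hseg he
  rcases hr with ⟨_, v, hv, hv'⟩ | ⟨_, h2⟩
  · have a1 := hv' i rfl
    have a2 := hv' j hseg
    have a3 := (h j i hj hseg).1
    rcases abs_eq_abs.mp he with h1 | h1
    · exact a3 h1
    · rcases abs_eq_abs.mp hv with h3 | h3
      · exact a1 h3.symm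
      · exact a2 (h1.trans h3.symm)
  · exact h2 i rfl rfl

/-- regularity of an exchange -/
theorem reg_op {x : V n} (h : Reg seg m x) {p q : Fin n} {e : ℝ}
    (hpq : seg p ≠ seg q)
    (h1 : ∀ k, k ≠ p → seg k = seg p → x k ≠ e * x q ∧ (seg p = m → x k ≠ -(e * x q)))
    (h2 : ∀ k, k ≠ q → seg k = seg q → x k ≠ e * x p ∧ (seg q = m → x k ≠ -(e * x p))) :
    Reg seg m (op p q e x) := by
  intro a b hab hseg
  have h0 := h a b hab hseg
  have hne : p ≠ q := fun h => hpq (by rw [h])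
  unfold op
  by_cases hap : a = p
  · subst hap
    have hbq : b ≠ q := fun h => hpq (by rw [← h, hseg])
    have hba : b ≠ a := fun h => hab h.symm
    have := h1 b hba hseg.symm
    simp only [if_true, hba, hbq, if_false]
    exact ⟨fun h => this.1 h.symm, fun hm h => this.2 hm (by rw [h, neg_neg])⟩
  · by_cases haq : a = q
    · subst haq
      have hbp : b ≠ p := fun h => hpq (by rw [← h, hseg])
      have hba : b ≠ a := fun h => hab h.symm
      have := h2 b hba hseg.symm
      simp only [if_true, hba, hap, hbp, if_false]
      exact ⟨fun h => this.1 h.symm, fun hm h => this.2 hm (by rw [h, neg_neg])⟩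
    · by_cases hbp : b = p
      · subst hbp
        have := h1 a hab hseg
        simp only [if_true, hap, haq, if_false]
        exact ⟨this.1, fun hm => this.2 (hseg ▸ hm)⟩
      · by_cases hbq : b = q
        · subst hbq
          have := h2 a hab hseg
          simp only [if_true, hap, haq, hbp, if_false]
          exact ⟨this.1, fun hm => this.2 (hseg ▸ hm)⟩
        · simpa [hap, haq, hbp, hbq] using h0

theorem op_p (p q : Fin n) (e : ℝ) (x : V n) : op p q e x p = e * x q := by simp [op]
theorem op_q {p q : Fin n} (h : p ≠ q) (e : ℝ) (x : V n) : op p q e x q = e * x p := by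
  simp [op, h.symm]
theorem op_o {p q k : Fin n} (h : k ≠ p) (h' : k ≠ q) (e : ℝ) (x : V n) : op p q e x k = x k := by
  simp [op, h, h']

/-- flips away from an exchange commute with it -/
theorem op_flip {p q i : Fin n} (hp : i ≠ p) (hq : i ≠ q) (e : ℝ) (x : V n) :
    op p q e (flip i x) = flip i (op p q e x) := by
  funext k
  unfold op flip
  have := hp.symm; have := hq.symm
  split_ifs <;> simp_all

theorem conj (M : Moves seg m C) {x : V n} {p q i : Fin n} {e : ℝ} (he : e = 1 ∨ e = -1)
    (hpq : seg p ≠ seg q) (ha : |x p| ≠ |x q|) (hx : Reg seg m x) (hy : Reg seg m (op p q e x))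
    (hp : i ≠ p) (hq : i ≠ q) (s1 : single seg x i) (s2 : single seg (op p q e x) i)
    (hf : C (op p q e x) (flip i (op p q e x))) : C x (flip i x) := by
  have c1 := M.ex x p q e he hpq ha hx hy
  have c2 := M.ex (flip i x) p q e he hpq (by simpa [abs_flip] using ha) (hx.flip s1)
    (by rw [op_flip hp hq]; exact hy.flip s2)
  rw [op_flip hp hq] at c2
  exact M.trans _ _ _ (M.trans _ _ _ c1 hf) (M.symm _ _ c2)

/-- transfer of flips -/
theorem transfer (M : Moves seg m C) {x : V n} {i j : Fin n}
    (hc : C (flip j x) (flip i (flip j (flip j x)))) (hf : C x (flip j x)) : C x (flip i x) := by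
  rw [flip_flip] at hc
  exact M.trans _ _ _ hf hc

theorem tr_fl (M : Moves seg m C) {x : V n} {i j : Fin n} (hij : seg i ≠ seg j) (hi : seg i ≠ m)
    (hj : seg j ≠ m) (ha : |x i| = |x j|) (h0 : x i ≠ 0) (hx : Reg seg m x)
    (si : single seg x i) (sj : single seg x j) (hf : C x (flip j x)) : C x (flip i x) := by
  refine transfer M (M.fl _ i j hij hi hj (by simpa [abs_flip] using ha) ?_ (hx.flip sj) ?_) hf
  · rw [← abs_ne_zero, abs_flip, abs_ne_zero]; exact h0
  · rw [flip_flip]; exact hx.flip si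

theorem tr_flm (M : Moves seg m C) {x : V n} {i j : Fin n} (hi : seg i ≠ m)
    (hj : seg j = m) (ha : |x i| = |x j|) (h0 : x i ≠ 0)
    (hn : ¬ (occ seg x (seg i) 0 ∧ occ seg x m 0)) (hx : Reg seg m x)
    (si : single seg x i) (hf : C x (flip j x)) : C x (flip i x) := by
  refine transfer M (M.flm _ i j hi hj (by simpa [abs_flip] using ha) ?_
    (by simpa [occ_flip] using hn) (hx.flip (single_m hx hj)) ?_) hf
  · rw [← abs_ne_zero, abs_flip, abs_ne_zero]; exact h0
  · rw [flip_flip]; exact hx.flip si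

theorem tr_inn (M : Moves seg m C) {x : V n} {i j : Fin n} (hij : seg i = seg j) (hi : seg i ≠ m)
    (hne : i ≠ j) (ha : |x i| ≠ |x j|) (h0 : x i ≠ 0) (h0' : x j ≠ 0) (hx : Reg seg m x)
    (si : single seg x i) (sj : single seg x j) (hf : C x (flip j x)) : C x (flip i x) := by
  refine transfer M (M.inn _ i j hij hi hne (by simpa [abs_flip] using ha) ?_ ?_ (hx.flip sj) ?_) hf
  · rw [← abs_ne_zero, abs_flip, abs_ne_zero]; exact h0
  · rw [← abs_ne_zero, abs_flip, abs_ne_zero]; exact h0'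
  · rw [flip_flip]; exact hx.flip si

theorem tr_mm (M : Moves seg m C) {x : V n} {i j : Fin n} (hi : seg i = m) (hj : seg j = m)
    (hx : Reg seg m x) (hf : C x (flip j x)) : C x (flip i x) := by
  by_cases h : i = j
  · rw [h]; exact hf
  · exact transfer M (M.mm _ i j hi hj h (hx.flip (single_m hx hj))) hf

/-- flips in the last row are free if it contains zero -/
theorem fl_m0 (M : Moves seg m C) {x : V n} {i : Fin n} (hi : seg i = m) (h0 : x i ≠ 0)
    (hx : Reg seg m x) (ho : occ seg x m 0) : C x (flip i x) := by
  obtain ⟨l, hl, hl0⟩ := ho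
  rw [abs_eq_zero] at hl0
  have := M.mm x i l hi hl (fun h => h0 (h ▸ hl0)) hx
  rwa [flip_zero l x hl0] at this

/-- swap with a zero and back -/
theorem swapback (M : Moves seg m C) {x : V n} {p q : Fin n} (hpq : seg p ≠ seg q) (hp : x p = 0)
    (hq : x q ≠ 0) (hx : Reg seg m x) (h1 : ¬ occ seg x (seg p) |x q|)
    (h2 : ¬ occ seg x (seg q) 0) (hs : single seg x q) : C x (flip q x) := by
  have hne : p ≠ q := fun h => hpq (by rw [h])
  have ha : |x p| ≠ |x q| := by rw [hp, abs_zero]; exact (abs_pos.mpr hq).ne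
  have hy : Reg seg m (op p q 1 x) := by
    refine reg_op hx hpq (fun k hk hks => ⟨fun h => h1 ⟨k, hks, by rw [h, one_mul]⟩,
      fun _ h => h1 ⟨k, hks, by rw [h, one_mul, abs_neg]⟩⟩)
      (fun k hk hks => ⟨fun h => h2 ⟨k, hks, by rw [h, hp]; simp⟩,
      fun _ h => h2 ⟨k, hks, by rw [h, hp]; simp⟩⟩)
  have hz : op p q (-1) (op p q 1 x) = flip q x := by
    funext k
    by_cases hk : k = p
    · subst hk; simp [op_p, op_q hne, flip, hne, hp]
    · by_cases hk' : k = q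
      · subst hk'; simp [op_p, op_q hne, flip]
      · simp [op_o hk hk', flip, hk']
  have c1 := M.ex x p q 1 (Or.inl rfl) hpq ha hx hy
  have c2 := M.ex (op p q 1 x) p q (-1) (Or.inr rfl) hpq
    (by rw [op_p, op_q hne]; simpa using ha.symm) hy (by rw [hz]; exact hx.flip hs)
  rw [hz] at c2
  exact M.trans _ _ _ c1 c2

/-- exchange with a zero -/
theorem exch0 {x : V n} {p q : Fin n} (hpq : seg p ≠ seg q) (hp : x p = 0)
    (hx : Reg seg m x) (h1 : room seg m x (seg p) |x q|)
    (h2 : ¬ occ seg x (seg q) 0) : ∃ e : ℝ, (e = 1 ∨ e = -1) ∧ Reg seg m (op p q e x) := by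
  have key : ∃ e : ℝ, (e = 1 ∨ e = -1) ∧
     ∀ k, k ≠ p → seg k = seg p → x k ≠ e * x q ∧ (seg p = m → x k ≠ -(e * x q)) := by
    rcases h1 with ⟨hm, v, hv, hv'⟩ | ⟨_, h⟩
    · rcases abs_eq_abs.mp hv with h3 | h3
      · exact ⟨1, Or.inl rfl, fun k _ hks => ⟨fun h => hv' k hks (by rw [h, h3, one_mul]),
          fun h => absurd h hm⟩⟩
      · exact ⟨-1, Or.inr rfl, fun k _ hks => ⟨fun h => hv' k hks (by rw [h, h3]; ring),
          fun h => absurd h hm⟩⟩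
    · exact ⟨1, Or.inl rfl, fun k _ hks => ⟨fun h' => h k hks (by rw [h', one_mul]),
          fun _ h' => h k hks (by rw [h', one_mul, abs_neg])⟩⟩
  obtain ⟨e, he, h⟩ := key
  exact ⟨e, he, reg_op hx hpq h (fun k hk hks => ⟨fun h => h2 ⟨k, hks, by rw [h, hp]; simp⟩,
      fun _ h => h2 ⟨k, hks, by rw [h, hp]; simp⟩⟩)⟩

theorem occ_congr {x y : V n} {s : ℕ} {t : ℝ} (h : ∀ i, seg i = s → y i = x i) :
    occ seg y s t ↔ occ seg x s t := by
  constructor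
  · rintro ⟨i, hi, ha⟩; exact ⟨i, hi, by rw [← h i hi, ha]⟩
  · rintro ⟨i, hi, ha⟩; exact ⟨i, hi, by rw [h i hi, ha]⟩

theorem room_congr {x y : V n} {s : ℕ} {t : ℝ} (h : ∀ i, seg i = s → y i = x i)
    (hr : room seg m x s t) : room seg m y s t := by
  rcases hr with ⟨a, v, hv, hv'⟩ | ⟨a, b⟩
  · exact Or.inl ⟨a, v, hv, fun i hi => by rw [h i hi]; exact hv' i hi⟩
  · exact Or.inr ⟨a, fun i hi => by rw [h i hi]; exact b i hi⟩

theorem single_congr {x y : V n} {i : Fin n} (h : ∀ j, seg j = seg i → y j = x j)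
    (hr : single seg x i) : single seg y i := by
  intro j hj hs; rw [h j hs, h i rfl]; exact hr j hj hs

end Core

section Core2

variable {n : ℕ} {seg : Fin n → ℕ} {m : ℕ} {C : V n → V n → Prop}

def Rk {n : ℕ} (seg : Fin n → ℕ) (m : ℕ) (x : V n) : ℕ → ℕ → Prop
  | 0, s => occ seg x s 0
  | k+1, s' => Rk seg m x k s' ∨ ∃ s t, Rk seg m x k s ∧ room seg m x s t ∧ occ seg x s' t

theorem Rk_zero {x : V n} {s : ℕ} (h : occ seg x s 0) : ∀ k, Rk seg m x k s
  | 0 => h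
  | k+1 => Or.inl (Rk_zero h k)

/-- facts about the result of an exchange with zero -/
theorem claimR (M : Moves seg m C) {x : V n} (hx : Reg seg m x) : ∀ k s, Rk seg m x k s →
    ∃ x', Reg seg m x' ∧ occ seg x' s 0 ∧ (∀ i, ¬ Rk seg m x k (seg i) → x' i = x i) ∧
      (∀ t, t ≠ 0 → room seg m x s t → room seg m x' s t) ∧
      (∀ i, ¬ Rk seg m x k (seg i) → single seg x i → C x' (flip i x') → C x (flip i x)) := by
  intro k
  induction k with
  | zero =>
    intro s hs
    exact ⟨x, hx, hs, fun _ _ => rfl, fun _ _ h => h, fun _ _ _ h => h⟩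
  | succ k ih =>
    intro s' hs'
    by_cases hk : Rk seg m x k s'
    · obtain ⟨x', a, b, c, d, e⟩ := ih s' hk
      exact ⟨x', a, b, fun i hi => c i (fun h => hi (Or.inl h)), d,
        fun i hi => e i (fun h => hi (Or.inl h))⟩
    · rcases hs' with hs' | ⟨s, t, hs, hr, ho⟩
      · exact absurd hs' hk
      · obtain ⟨x', hx', hz, hc, hd, he⟩ := ih s hs
        obtain ⟨p, hp, hp0⟩ := hz
        rw [abs_eq_zero] at hp0
        obtain ⟨q, hq, hqt⟩ := ho
        have hn0 : ¬ occ seg x s' 0 := fun h => hk (Rk_zero h k)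
        have ht : t ≠ 0 := fun h => hn0 ⟨q, hq, by rw [hqt, h]⟩
        have hrow : ∀ i, seg i = s' → x' i = x i := fun i hi => hc i (by rw [hi]; exact hk)
        have hxq : x' q = x q := hrow q hq
        have hss : s ≠ s' := fun h => hk (h ▸ hs)
        have hpq : seg p ≠ seg q := by rw [hp, hq]; exact hss
        have hne : p ≠ q := fun h => hpq (by rw [h])
        have hn0' : ¬ occ seg x' (seg q) 0 := by rw [hq, occ_congr hrow]; exact hn0
        obtain ⟨e, he1, hy⟩ := exch0 hpq hp0 hx' (by rw [hp, hxq, hqt]; exact hd t ht hr) hn0'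
        have hab : |x' p| ≠ |x' q| := by
          rw [hp0, hxq, hqt, abs_zero]; exact ht.symm
        refine ⟨op p q e x', hy, ⟨q, hq, by rw [op_q hne, hp0]; simp⟩, ?_, ?_, ?_⟩
        · intro i hi
          have h1 : i ≠ p := by rintro rfl; exact hi (Or.inl (by rw [hp]; exact hs))
          have h2 : i ≠ q := by
            rintro rfl; exact hi (Or.inr ⟨s, t, hs, hr, ⟨i, rfl, hqt⟩⟩)
          rw [op_o h1 h2]; exact hc i (fun h => hi (Or.inl h))
        · intro t' ht' hr'
          rcases hr' with ⟨a, v, hv, hv'⟩ | ⟨a, b⟩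
          · refine Or.inl ⟨a, v, hv, fun i hi => ?_⟩
            have h1 : i ≠ p := by rintro rfl; exact hss (hp.symm.trans hi)
            by_cases h2 : i = q
            · subst h2
              rw [op_q hne, hp0]; rintro h3; apply ht'; rw [← hv, ← h3]; simp
            · rw [op_o h1 h2, hrow i hi]; exact hv' i hi
          · refine Or.inr ⟨a, fun i hi => ?_⟩
            have h1 : i ≠ p := by rintro rfl; exact hss (hp.symm.trans hi)
            by_cases h2 : i = q
            · subst h2
              rw [op_q hne, hp0]; simpa using ht'.symm
            · rw [op_o h1 h2, hrow i hi]; exact b i hi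
        · intro i hi hsi hC
          have h0 : ¬ Rk seg m x k (seg i) := fun h => hi (Or.inl h)
          have g1 : seg i ≠ seg p := by intro h; apply h0; rw [h, hp]; exact hs
          have g2 : seg i ≠ seg q := by
            intro h; exact hi (Or.inr ⟨s, t, hs, hr, ⟨q, h.symm, hqt⟩⟩)
          have h1 : i ≠ p := fun h => g1 (by rw [h])
          have h2 : i ≠ q := fun h => g2 (by rw [h])
          have hrow' : ∀ j, seg j = seg i → x' j = x j := fun j hj => hc j (by rw [hj]; exact h0)
          have s1 : single seg x' i := single_congr hrow' hsi
          have s2 : single seg (op p q e x') i := single_congr (fun j hj => by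
            rw [op_o]
            · rintro rfl; exact g1 hj.symm
            · rintro rfl; exact g2 hj.symm) s1
          exact he i h0 hsi (conj M he1 hpq hab hx' hy h1 h2 s1 s2 hC)

theorem min_layer {P : ℕ → Prop} (h : ∃ k, P k) : P 0 ∨ ∃ k, ¬ P k ∧ P (k+1) := by
  by_contra hcon
  push Not at hcon
  obtain ⟨h0, h1⟩ := hcon
  obtain ⟨k, hk⟩ := h
  have : ∀ k, ¬ P k := fun k => by
    induction k with
    | zero => exact h0
    | succ k ih => exact h1 k ih
  exact this k hk

theorem rowM (M : Moves seg m C) {x : V n} (hx : Reg seg m x) {i : Fin n} (hi : seg i = m)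
    (h0 : x i ≠ 0) (hm : ∃ k, Rk seg m x k m) : C x (flip i x) := by
  by_cases hz : occ seg x m 0
  · exact fl_m0 M hi h0 hx hz
  rcases min_layer hm with h | ⟨k, hk, hk1⟩
  · exact absurd h hz
  rcases hk1 with hk1 | ⟨s, t, hs, hr, ho⟩
  · exact absurd hk1 hk
  obtain ⟨x', hx', ⟨p, hp, hp0⟩, hc, hd, he⟩ := claimR M hx k s hs
  rw [abs_eq_zero] at hp0
  obtain ⟨q, hq, hqt⟩ := ho
  have ht : t ≠ 0 := fun h => hz ⟨q, hq, by rw [hqt, h]⟩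
  have hrow : ∀ j, seg j = m → x' j = x j := fun j hj => hc j (by rw [hj]; exact hk)
  have hz' : ¬ occ seg x' m 0 := by rw [occ_congr hrow]; exact hz
  have hsm : s ≠ m := fun h => hk (h ▸ hs)
  have hxq : x' q = x q := hrow q hq
  have hq0 : x' q ≠ 0 := by rw [hxq, ← abs_ne_zero, hqt]; exact ht
  have hpq : seg p ≠ seg q := by rw [hp, hq]; exact hsm
  refine he i (by rw [hi]; exact hk) (single_m hx hi) (tr_mm M hi hq hx' ?_)
  have hr' := hd t ht hr
  by_cases ho' : occ seg x' s t
  · obtain ⟨r, hr1, hr2⟩ := ho'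
    have sr : single seg x' r := single_of_room hx' (by rw [hr1, hr2]; exact hr')
    have hr0 : x' r ≠ 0 := by rw [← abs_ne_zero, hr2]; exact ht
    have c1 : C x' (flip r x') := M.in0 x' r p (by rw [hr1, hp]) (by rw [hr1]; exact hsm)
      hr0 hp0 (fun h => hz' h.1) hx' (hx'.flip sr)
    -- transfer from r to q
    have hb : |x' r| = |x' q| := by rw [hr2, hxq, hqt]
    have c2 := M.flm (flip r x') r q (by rw [hr1]; exact hsm) hq (by simpa [abs_flip] using hb)
      (by rw [← abs_ne_zero, abs_flip, abs_ne_zero]; exact hr0)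
      (by simp only [occ_flip]; exact fun h => hz' h.2) (hx'.flip sr)
      (by rw [flip_comm r q, flip_flip]; exact hx'.flip (single_m hx' hq))
    rw [flip_comm r q, flip_flip] at c2
    exact M.trans _ _ _ c1 c2
  · exact swapback M hpq hp0 hq0 hx' (by rw [hp, hxq, hqt]; exact ho')
      (by rw [hq]; exact hz') (single_m hx' hq)

/-- Case 2 : `seg i` is reachable from the zero column, and contains no zero. -/
theorem case2 (M : Moves seg m C) {x : V n} (hx : Reg seg m x) {i : Fin n} (hi : seg i ≠ m)
    (h0 : x i ≠ 0) (hsi : single seg x i) (hno : ¬ occ seg x (seg i) 0)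
    (hm : ∃ k, Rk seg m x k (seg i)) : C x (flip i x) := by
  rcases min_layer hm with h | ⟨k, hk, hk1⟩
  · exact absurd h hno
  rcases hk1 with hk1 | ⟨s, t, hs, hr, ho⟩
  · exact absurd hk1 hk
  obtain ⟨x', hx', ⟨p, hp, hp0⟩, hc, hd, he⟩ := claimR M hx k s hs
  rw [abs_eq_zero] at hp0
  obtain ⟨q, hq, hqt⟩ := ho
  have ht : t ≠ 0 := fun h => hno ⟨q, hq, by rw [hqt, h]⟩
  have hrow : ∀ j, seg j = seg i → x' j = x j := fun j hj => hc j (by rw [hj]; exact hk)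
  have hno' : ¬ occ seg x' (seg i) 0 := by rw [occ_congr hrow]; exact hno
  have hsi' : single seg x' i := single_congr hrow hsi
  have hxi : x' i = x i := hrow i rfl
  have hi0 : x' i ≠ 0 := by rw [hxi]; exact h0
  have hxq : x' q = x q := hrow q hq
  have hq0 : x' q ≠ 0 := by rw [hxq, ← abs_ne_zero, hqt]; exact ht
  have hss : s ≠ seg i := fun h => hk (h ▸ hs)
  have hpq : seg p ≠ seg q := by rw [hp, hq]; exact hss
  have hne : p ≠ q := fun h => hpq (by rw [h])
  have hr' := hd t ht hr
  refine he i hk hsi ?_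
  -- if the value of i occurs in the last row of x' we are done
  by_cases hom : occ seg x' m |x' i|
  · obtain ⟨r, hrm, hra⟩ := hom
    refine tr_flm M hi hrm hra.symm hi0 (fun h => hno' h.1) hx' hsi' ?_
    refine rowM M hx' hrm (by rw [← abs_ne_zero, hra, abs_ne_zero]; exact hi0) ⟨2, ?_⟩
    refine Or.inr ⟨seg i, |x' i|, Or.inr ⟨s, t, ⟨p, hp, by rw [hp0, abs_zero]⟩, hr',
      ⟨q, hq, by rw [hxq, hqt]⟩⟩, room_of_single hi hi0 hsi', ⟨r, hrm, hra⟩⟩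
  by_cases hqi : q = i
  · subst hqi
    by_cases ho' : occ seg x' s t
    · obtain ⟨r, hr1, hr2⟩ := ho'
      have sr : single seg x' r := single_of_room hx' (by rw [hr1, hr2]; exact hr')
      have hr0 : x' r ≠ 0 := by rw [← abs_ne_zero, hr2]; exact ht
      have hb : |x' q| = |x' r| := by rw [hr2, hxq, hqt]
      have hsm : s ≠ m := by
        rintro rfl
        exact hom ⟨r, hr1, hb.symm⟩
      refine tr_fl M (by rw [hr1]; exact hss.symm) hi (by rw [hr1]; exact hsm) hb hi0 hx' hsi' sr ?_
      exact M.in0 x' r p (by rw [hr1, hp]) (by rw [hr1]; exact hsm) hr0 hp0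
        (fun h => hom (by rw [hb]; exact h.2)) hx' (hx'.flip sr)
    · exact swapback M hpq hp0 hq0 hx' (by rw [hp, hxq, hqt]; exact ho') hno' hsi'
  · have hqt' : |x' q| ≠ |x' i| := hsi' q hqi hq
    obtain ⟨e, he1, hy⟩ := exch0 hpq hp0 hx' (by rw [hp, hxq, hqt]; exact hr') (by rw [hq]; exact hno')
    have hab : |x' p| ≠ |x' q| := by
      rw [hp0, abs_zero]; exact (abs_pos.mpr hq0).ne
    have hip : i ≠ p := fun h => hss (by rw [h, hp])
    have hiq : i ≠ q := fun h => hqi h.symm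
    have hae : |e| = 1 := by rcases he1 with h | h <;> simp [h]
    have s2 : single seg (op p q e x') i := by
      intro j hj hjs
      rw [op_o hip hiq]
      by_cases h1 : j = p
      · rw [h1, op_p, abs_mul, hae, one_mul]; exact hqt'
      · by_cases h2 : j = q
        · rw [h2, op_q hne, hp0, mul_zero, abs_zero]; exact (abs_pos.mpr hi0).ne
        · rw [op_o h1 h2]; exact hsi' j hj hjs
    refine conj M he1 hpq hab hx' hy hip hiq hsi' s2 ?_
    refine M.in0 _ i q hq.symm hi (by rw [op_o hip hiq]; exact hi0)
      (by rw [op_q hne, hp0, mul_zero]) ?_ hy (hy.flip s2)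
    rintro ⟨-, j, hjm, hja⟩
    rw [op_o hip hiq] at hja
    by_cases h1 : j = p
    · rw [h1, op_p, abs_mul, hae, one_mul] at hja; exact hqt' hja
    · by_cases h2 : j = q
      · exact hi (by rw [← hq, ← h2, hjm])
      · rw [op_o h1 h2] at hja; exact hom ⟨j, hjm, hja⟩

end Core2

section Core3

variable {n : ℕ} {seg : Fin n → ℕ} {m : ℕ} {C : V n → V n → Prop}

def Lk {n : ℕ} (seg : Fin n → ℕ) (m : ℕ) (x : V n) : ℕ → ℕ → Prop
  | 0, s => ¬ occ seg x s 0
  | k+1, s' => Lk seg m x k s' ∨ ∃ t s, room seg m x s' t ∧ Lk seg m x k s ∧ occ seg x s t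

theorem Lk_zero {x : V n} {s : ℕ} (h : ¬ occ seg x s 0) : ∀ k, Lk seg m x k s
  | 0 => h
  | k+1 => Or.inl (Lk_zero h k)

theorem room_zero {x : V n} {s : ℕ} (h : room seg m x s 0) : ¬ occ seg x s 0 := by
  rintro ⟨i, hi, ha⟩
  rcases h with ⟨_, v, hv, hv'⟩ | ⟨_, b⟩
  · exact hv' i hi (by rw [abs_eq_zero.mp ha, abs_eq_zero.mp hv])
  · exact b i hi ha

theorem claimL (M : Moves seg m C) {x : V n} (hx : Reg seg m x) : ∀ k s, Lk seg m x k s →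
    ∃ x', Reg seg m x' ∧ ¬ occ seg x' s 0 ∧ (∀ i, ¬ Lk seg m x k (seg i) → x' i = x i) ∧
      (∀ t, t ≠ 0 → occ seg x s t → occ seg x' s t) ∧
      (∀ i, ¬ Lk seg m x k (seg i) → single seg x i → C x' (flip i x') → C x (flip i x)) := by
  intro k
  induction k with
  | zero =>
    intro s hs
    exact ⟨x, hx, hs, fun _ _ => rfl, fun _ _ h => h, fun _ _ _ h => h⟩
  | succ k ih =>
    intro s' hs'
    by_cases hk : Lk seg m x k s'
    · obtain ⟨x', a, b, c, d, e⟩ := ih s' hk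
      exact ⟨x', a, b, fun i hi => c i (fun h => hi (Or.inl h)), d,
        fun i hi => e i (fun h => hi (Or.inl h))⟩
    · rcases hs' with hs' | ⟨t, s, hr, hs, ho⟩
      · exact absurd hs' hk
      · obtain ⟨x', hx', hz, hc, hd, he⟩ := ih s hs
        have hocc : occ seg x s' 0 := by
          by_contra h; exact hk (Lk_zero h k)
        have ht : t ≠ 0 := by
          rintro rfl; exact room_zero hr hocc
        obtain ⟨p, hp, hp0⟩ := hocc
        rw [abs_eq_zero] at hp0
        obtain ⟨q, hq, hqt⟩ := hd t ht ho
        have hrow : ∀ i, seg i = s' → x' i = x i := fun i hi => hc i (by rw [hi]; exact hk)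
        have hp0' : x' p = 0 := by rw [hrow p hp, hp0]
        have hss : s' ≠ s := fun h => hk (h ▸ hs)
        have hpq : seg p ≠ seg q := by rw [hp, hq]; exact hss
        have hne : p ≠ q := fun h => hpq (by rw [h])
        obtain ⟨e, he1, hy⟩ := exch0 hpq hp0' hx' (by rw [hp, hqt]; exact room_congr hrow hr)
          (by rw [hq]; exact hz)
        have hae : |e| = 1 := by rcases he1 with h | h <;> simp [h]
        have hab : |x' p| ≠ |x' q| := by
          rw [hp0', hqt, abs_zero]; exact ht.symm
        refine ⟨op p q e x', hy, ?_, ?_, ?_, ?_⟩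
        · rintro ⟨j, hj, hj0⟩
          have h2 : j ≠ q := by rintro rfl; exact hss (hj.symm.trans hq)
          by_cases h1 : j = p
          · rw [h1, op_p, abs_mul, hae, one_mul, hqt] at hj0; exact ht hj0
          · rw [op_o h1 h2, abs_eq_zero] at hj0
            exact (hx' j p h1 (hj.trans hp.symm)).1 (hj0.trans hp0'.symm)
        · intro i hi
          have h1 : i ≠ p := by
            rintro rfl; exact hi (Or.inr ⟨t, s, by rw [hp]; exact hr, hs, ho⟩)
          have h2 : i ≠ q := by rintro rfl; exact hi (Or.inl (by rw [hq]; exact hs))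
          rw [op_o h1 h2]; exact hc i (fun h => hi (Or.inl h))
        · rintro t' ht' ⟨j, hj, hjt⟩
          have h2 : j ≠ q := by rintro rfl; exact hss (hj.symm.trans hq)
          have h1 : j ≠ p := by
            rintro rfl; rw [hp0, abs_zero] at hjt; exact ht' hjt.symm
          exact ⟨j, hj, by rw [op_o h1 h2, hrow j hj, hjt]⟩
        · intro i hi hsi hC
          have h0 : ¬ Lk seg m x k (seg i) := fun h => hi (Or.inl h)
          have g1 : seg i ≠ seg p := by
            intro h; exact hi (Or.inr ⟨t, s, by rw [h, hp]; exact hr, hs, ho⟩)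
          have g2 : seg i ≠ seg q := by intro h; apply h0; rw [h, hq]; exact hs
          have h1 : i ≠ p := fun h => g1 (by rw [h])
          have h2 : i ≠ q := fun h => g2 (by rw [h])
          have hrow' : ∀ j, seg j = seg i → x' j = x j := fun j hj => hc j (by rw [hj]; exact h0)
          have s1 : single seg x' i := single_congr hrow' hsi
          have s2 : single seg (op p q e x') i := single_congr (fun j hj => by
            rw [op_o]
            · rintro rfl; exact g1 hj.symm
            · rintro rfl; exact g2 hj.symm) s1
          exact he i h0 hsi (conj M he1 hpq hab hx' hy h1 h2 s1 s2 hC)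

theorem case3L (M : Moves seg m C) {x : V n} (hx : Reg seg m x) {i : Fin n} (hi : seg i ≠ m)
    (h0 : x i ≠ 0) (hsi : single seg x i) (hz : occ seg x (seg i) 0)
    (hm : ∃ k, Lk seg m x k (seg i)) : C x (flip i x) := by
  rcases min_layer hm with h | ⟨k, hk, hk1⟩
  · exact absurd hz h
  rcases hk1 with hk1 | ⟨t, s, hr, hs, ho⟩
  · exact absurd hk1 hk
  obtain ⟨x', hx', hns, hc, hd, he⟩ := claimL M hx k s hs
  have ht : t ≠ 0 := by
    rintro rfl; exact room_zero hr hz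
  have hrow : ∀ j, seg j = seg i → x' j = x j := fun j hj => hc j (by rw [hj]; exact hk)
  obtain ⟨p, hp, hp0⟩ := (occ_congr hrow).mpr hz
  rw [abs_eq_zero] at hp0
  have hsi' : single seg x' i := single_congr hrow hsi
  have hxi : x' i = x i := hrow i rfl
  have hi0 : x' i ≠ 0 := by rw [hxi]; exact h0
  have hr' : room seg m x' (seg i) t := room_congr hrow hr
  have hss : seg i ≠ s := fun h => hk (h ▸ hs)
  refine he i hk hsi ?_
  by_cases hexc : occ seg x' m 0 ∧ occ seg x' m |x' i|
  swap
  · exact M.in0 x' i p hp.symm hi hi0 hp0 hexc hx' (hx'.flip hsi')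
  obtain ⟨hm0, r, hrm, hra⟩ := hexc
  have hsm : s ≠ m := by rintro rfl; exact hns hm0
  have hr0 : x' r ≠ 0 := by rw [← abs_ne_zero, hra, abs_ne_zero]; exact hi0
  by_cases hta : t = |x' i|
  · -- the value of i itself
    obtain ⟨q, hq, hqt⟩ := hd t ht ho
    have hq0 : x' q ≠ 0 := by rw [← abs_ne_zero, hqt]; exact ht
    by_cases sq : single seg x' q
    · refine tr_fl M (by rw [hq]; exact hss) hi (by rw [hq]; exact hsm) (by rw [hqt, hta]) hi0 hx'
        hsi' sq ?_
      exact tr_flm M (by rw [hq]; exact hsm) hrm (by rw [hqt, hta, hra]) hq0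
        (fun h => hns (by rw [← hq]; exact h.1)) hx' sq (fl_m0 M hrm hr0 hx' hm0)
    · -- both signs in row s
      unfold single at sq
      push Not at sq
      obtain ⟨q', hq', hqs', hqq⟩ := sq
      have hq2 : x' q' = - x' q := by
        rcases abs_eq_abs.mp hqq with h | h
        · exact absurd h (hx' q' q hq' hqs').1
        · exact h
      have : ∃ u w : Fin n, u ≠ w ∧ seg u = s ∧ seg w = s ∧ x' u = - x' i ∧ x' w = x' i := by
        rcases abs_eq_abs.mp (hqt.trans hta) with h | h
        · exact ⟨q', q, hq', hqs'.trans hq, hq, by rw [hq2, h], h⟩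
        · exact ⟨q, q', hq'.symm, hq, hqs'.trans hq, h, by rw [hq2, h, neg_neg]⟩
      obtain ⟨u, w, huw, hu, hw, hux, hwx⟩ := this
      have hpu : seg p ≠ seg u := by rw [hp, hu]; exact hss
      have hiu : seg i ≠ seg u := by rw [hu]; exact hss
      have npu : p ≠ u := fun h => hpu (by rw [h])
      have niu : i ≠ u := fun h => hiu (by rw [h])
      have nip : i ≠ p := fun h => hi0 (by rw [h, hp0])
      have hy : Reg seg m (op p u 1 x') := by
        refine reg_op hx' hpu (fun k hk hks => ⟨fun h => ?_, fun h => absurd (hp ▸ h) hi⟩)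
          (fun k hk hks => ⟨fun h => ?_, fun h => absurd (hu ▸ h) hsm⟩)
        · rw [one_mul, hux] at h
          by_cases hki : k = i
          · subst hki; exact hi0 (by linarith)
          · exact hsi' k hki (hks.trans hp) (by rw [h, abs_neg])
        · exact hns ⟨k, hks.trans hu, by rw [h, hp0]; simp⟩
      have c1 := M.ex x' p u 1 (Or.inl rfl) hpu (by
        rw [hp0, hux, abs_zero, abs_neg]; exact (abs_pos.mpr hi0).ne) hx' hy
      set y := op p u 1 x' with hydef
      have yi : y i = x' i := op_o nip niu 1 x'
      have yu : y u = 0 := by rw [hydef, op_q npu, hp0, mul_zero]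
      have yp : y p = - x' i := by rw [hydef, op_p, hux, one_mul]
      have yo : ∀ k, k ≠ p → k ≠ u → y k = x' k := fun k h1 h2 => op_o h1 h2 1 x'
      have hzr : Reg seg m (op i u (-1) y) := by
        refine reg_op hy hiu (fun k hk hks => ⟨fun h => ?_, fun h => absurd h hi⟩)
          (fun k hk hks => ⟨fun h => ?_, fun h => absurd (hu ▸ h) hsm⟩)
        · rw [yu, mul_zero] at h
          by_cases hkp : k = p
          · rw [hkp, yp] at h; exact hi0 (by linarith)
          · have hku : k ≠ u := by rintro rfl; exact hiu hks.symm
            rw [yo k hkp hku] at h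
            exact (hx' k p hkp (hks.trans hp.symm)).1 (h.trans hp0.symm)
        · have hkp : k ≠ p := by rintro rfl; exact hpu hks
          rw [yi, yo k hkp hk] at h
          exact (hx' k u hk hks).1 (by rw [h, hux]; ring)
      have c2 := M.ex y i u (-1) (Or.inr rfl) hiu (by
        rw [yi, yu, abs_zero]; exact (abs_pos.mpr hi0).ne') hy hzr
      have c3 := M.perm _ i p hp.symm nip hzr
      have hfin : op i p 1 (op i u (-1) y) = flip i x' := by
        funext k
        by_cases h1 : k = i
        · subst h1
          rw [op_p, op_o nip.symm npu, yp]; simp [flip]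
        · by_cases h2 : k = p
          · subst h2
            rw [op_q nip, op_p, yu]; simp [flip, nip.symm, hp0]
          · rw [op_o h1 h2]
            by_cases h3 : k = u
            · subst h3
              rw [op_q niu, yi]; simp [flip, niu.symm, hux]
            · rw [op_o h1 h3, yo k h2 h3]; simp [flip, h1]
      rw [hfin] at c3
      exact M.trans _ _ _ c1 (M.trans _ _ _ c2 c3)
  · obtain ⟨q, hq, hqt⟩ := hd t ht ho
    have hpq : seg p ≠ seg q := by rw [hp, hq]; exact hss
    have hne : p ≠ q := fun h => hpq (by rw [h])
    obtain ⟨e, he1, hy⟩ := exch0 hpq hp0 hx' (by rw [hp, hqt]; exact hr') (by rw [hq]; exact hns)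
    have hab : |x' p| ≠ |x' q| := by
      rw [hp0, abs_zero, hqt]; exact ht.symm
    have hip : i ≠ p := fun h => hi0 (by rw [h, hp0])
    have hiq : i ≠ q := fun h => hss (by rw [h, hq])
    have hrp : r ≠ p := fun h => hr0 (by rw [h, hp0])
    have hrq : r ≠ q := fun h => hsm (by rw [← hq, ← h, hrm])
    have hae : |e| = 1 := by rcases he1 with h | h <;> simp [h]
    have s2 : single seg (op p q e x') i := by
      intro j hj hjs
      rw [op_o hip hiq]
      by_cases h1 : j = p
      · rw [h1, op_p, abs_mul, hae, one_mul, hqt]; exact hta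
      · have h2 : j ≠ q := fun h => hss (by rw [← hq, ← h, hjs])
        rw [op_o h1 h2]; exact hsi' j hj hjs
    refine conj M he1 hpq hab hx' hy hip hiq hsi' s2 ?_
    refine tr_flm M hi hrm (by rw [op_o hip hiq, op_o hrp hrq, hra]) (by rw [op_o hip hiq]; exact hi0)
      ?_ hy s2 ?_
    · rintro ⟨⟨j, hj, hj0⟩, -⟩
      have h2 : j ≠ q := fun h => hss (by rw [← hq, ← h, hj])
      by_cases h1 : j = p
      · rw [h1, op_p, abs_mul, hae, one_mul, hqt] at hj0; exact ht hj0
      · rw [op_o h1 h2, abs_eq_zero] at hj0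
        exact (hx' j p h1 (hj.trans hp.symm)).1 (hj0.trans hp0.symm)
    · refine fl_m0 M hrm (by rw [op_o hrp hrq]; exact hr0) hy ?_
      obtain ⟨l, hl, hl0⟩ := hm0
      refine ⟨l, hl, ?_⟩
      have h1 : l ≠ p := by rintro rfl; exact hi (hp ▸ hl)
      have h2 : l ≠ q := by rintro rfl; exact hsm (hq ▸ hl)
      rw [op_o h1 h2, hl0]

end Core3

section Core4

variable {n : ℕ} {seg : Fin n → ℕ} {m : ℕ} {C : V n → V n → Prop}

def Qk {n : ℕ} (seg : Fin n → ℕ) (m : ℕ) (x : V n) : ℕ → ℝ → Prop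
  | 0, t => room seg m x m t
  | k+1, t' => Qk seg m x k t' ∨ ∃ t s, Qk seg m x k t ∧ occ seg x s t ∧ room seg m x s t'

theorem room_m {x : V n} {t : ℝ} (h : ¬ occ seg x m t) : room seg m x m t :=
  Or.inr ⟨rfl, fun i hi ha => h ⟨i, hi, ha⟩⟩

theorem room_m' {x : V n} {t : ℝ} (h : room seg m x m t) : ¬ occ seg x m t := by
  rintro ⟨i, hi, ha⟩
  rcases h with ⟨h, _⟩ | ⟨_, b⟩
  · exact h rfl
  · exact b i hi ha

theorem Qk_zero {x : V n} {t : ℝ} (h : room seg m x m t) : ∀ k, Qk seg m x k t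
  | 0 => h
  | k+1 => Or.inl (Qk_zero h k)

/-- exchange with an entry of the last row -/
theorem exchM {x : V n} {r j : Fin n} (hr : seg r = m) (hj : seg j ≠ m)
    (hx : Reg seg m x) (h1 : room seg m x (seg j) |x r|)
    (h2 : ¬ occ seg x m |x j|) : ∃ e : ℝ, (e = 1 ∨ e = -1) ∧ Reg seg m (op r j e x) := by
  have hrj : seg r ≠ seg j := by rw [hr]; exact hj.symm
  have key : ∃ e : ℝ, (e = 1 ∨ e = -1) ∧
     ∀ k, k ≠ j → seg k = seg j → x k ≠ e * x r ∧ (seg j = m → x k ≠ -(e * x r)) := by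
    rcases h1 with ⟨hm, v, hv, hv'⟩ | ⟨h, _⟩
    · rcases abs_eq_abs.mp hv with h3 | h3
      · exact ⟨1, Or.inl rfl, fun k _ hks => ⟨fun h => hv' k hks (by rw [h, h3, one_mul]),
          fun h => absurd h hm⟩⟩
      · exact ⟨-1, Or.inr rfl, fun k _ hks => ⟨fun h => hv' k hks (by rw [h, h3]; ring),
          fun h => absurd h hm⟩⟩
    · exact absurd h hj
  obtain ⟨e, he, h⟩ := key
  have hae : |e| = 1 := by rcases he with h | h <;> simp [h]
  exact ⟨e, he, reg_op hx hrj (fun k hk hks =>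
    ⟨fun h => h2 ⟨k, hks.trans hr, by rw [h, abs_mul, hae, one_mul]⟩,
      fun _ h => h2 ⟨k, hks.trans hr, by rw [h, abs_neg, abs_mul, hae, one_mul]⟩⟩) h⟩

theorem claimQ (M : Moves seg m C) {x : V n} (hx : Reg seg m x)
    : ∀ k t, Qk seg m x k t →
    ∃ x', Reg seg m x' ∧ ¬ occ seg x' m t ∧
      (∀ i, ¬ Qk seg m x k |x i| ∨ ¬ Qk seg m x k |x' i| → x' i = x i) ∧
      (∀ s, s ≠ m → occ seg x s t → occ seg x' s t) ∧
      (∀ i, ¬ Qk seg m x k |x i| → single seg x i → C x' (flip i x') → C x (flip i x)) := by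
  intro k
  induction k with
  | zero =>
    intro t ht
    exact ⟨x, hx, room_m' ht, fun _ _ => rfl, fun _ _ h => h, fun _ _ _ h => h⟩
  | succ k ih =>
    intro t' ht'
    by_cases hk : Qk seg m x k t'
    · obtain ⟨x', a, b, c, d, e⟩ := ih t' hk
      exact ⟨x', a, b, fun i hi => c i (hi.imp (fun h h' => h (Or.inl h')) (fun h h' => h (Or.inl h'))),
        d, fun i hi => e i (fun h => hi (Or.inl h))⟩
    · have ht2 := ht'
      rcases ht' with ht' | ⟨t, s, ht, ho, hr⟩
      · exact absurd ht' hk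
      · obtain ⟨x', hx', hz, hc, hd, he⟩ := ih t ht
        have hsm : s ≠ m := by
          rintro rfl; exact hk (Qk_zero hr k)
        have hom : occ seg x m t' := by
          by_contra h; exact hk (Qk_zero (room_m h) k)
        obtain ⟨r, hrm, hrt⟩ := hom
        have hxr : x' r = x r := hc r (Or.inl (by rw [hrt]; exact hk))
        have hrt' : |x' r| = t' := by rw [hxr, hrt]
        obtain ⟨j, hjs, hjt⟩ := hd s hsm ho
        have htt : t ≠ t' := fun h => hk (h ▸ ht)
        have hroom : room seg m x' s t' := by
          rcases hr with ⟨a, v, hv, hv'⟩ | ⟨a, _⟩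
          · refine Or.inl ⟨a, v, hv, fun i hi h => hv' i hi ?_⟩
            rw [← hc i (Or.inr (by rw [h, hv]; exact hk)), h]
          · exact absurd a hsm
        have hjm : seg j ≠ m := by rw [hjs]; exact hsm
        have hrj : seg r ≠ seg j := by rw [hrm]; exact hjm.symm
        have hne : r ≠ j := fun h => hrj (by rw [h])
        obtain ⟨e, he1, hy⟩ := exchM hrm hjm hx' (by rw [hjs, hrt']; exact hroom) (by rw [hjt]; exact hz)
        have hae : |e| = 1 := by rcases he1 with h | h <;> simp [h]
        have hab : |x' r| ≠ |x' j| := by rw [hrt', hjt]; exact htt.symm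
        have yr : |op r j e x' r| = t := by rw [op_p, abs_mul, hae, one_mul, hjt]
        have yj : |op r j e x' j| = t' := by rw [op_q hne, abs_mul, hae, one_mul, hrt']
        have ht1 : Qk seg m x (k+1) t := Or.inl ht
        have hxj : Qk seg m x k |x j| := by
          by_contra h
          have := hc j (Or.inl h)
          rw [← this, hjt] at h; exact h ht
        refine ⟨op r j e x', hy, ?_, ?_, ?_, ?_⟩
        · rintro ⟨i, hi, hit⟩
          by_cases h1 : i = r
          · rw [h1, yr] at hit; exact htt hit
          · have h2 : i ≠ j := by rintro rfl; exact hjm hi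
            rw [op_o h1 h2] at hit
            exact single_m hx' hrm i h1 (hi.trans hrm.symm) (by rw [hit, hrt'])
        · intro i hi
          by_cases h1 : i = r
          · subst h1
            rcases hi with hi | hi
            · rw [hrt] at hi; exact absurd ht2 hi
            · rw [yr] at hi; exact absurd ht1 hi
          · by_cases h2 : i = j
            · subst h2
              rcases hi with hi | hi
              · exact absurd (Or.inl hxj) hi
              · rw [yj] at hi; exact absurd ht2 hi
            · rw [op_o h1 h2] at hi ⊢
              exact hc i (hi.imp (fun h h' => h (Or.inl h')) (fun h h' => h (Or.inl h')))
        · rintro s' hs' ⟨i, hi, hit⟩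
          have hxi : x' i = x i := hc i (Or.inl (by rw [hit]; exact hk))
          have h1 : i ≠ r := by rintro rfl; exact hs' (hi.symm.trans hrm)
          have h2 : i ≠ j := by rintro rfl; rw [← hxi, hjt] at hit; exact htt hit
          exact ⟨i, hi, by rw [op_o h1 h2, hxi, hit]⟩
        · intro i hi hsi hC
          have h0 : ¬ Qk seg m x k |x i| := fun h => hi (Or.inl h)
          have hxi : x' i = x i := hc i (Or.inl h0)
          have h1 : i ≠ r := by rintro rfl; rw [hrt] at hi; exact hi ht2
          have h2 : i ≠ j := by rintro rfl; exact h0 hxj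
          have s1 : single seg x' i := by
            intro u hu hus hua
            have : x' u = x u := hc u (Or.inr (by rw [hua, hxi]; exact h0))
            rw [this, hxi] at hua
            exact hsi u hu hus hua
          have s2 : single seg (op r j e x') i := by
            intro u hu hus
            rw [op_o h1 h2]
            by_cases g1 : u = r
            · rw [g1, yr, hxi]; intro h; rw [h] at ht; exact h0 ht
            · by_cases g2 : u = j
              · rw [g2, yj, hxi]; intro h; rw [h] at ht2; exact hi ht2
              · rw [op_o g1 g2]; exact s1 u hu hus
          exact he i h0 hsi (conj M he1 hrj hab hx' hy h1 h2 s1 s2 hC)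

theorem case3Q (M : Moves seg m C) {x : V n} (hx : Reg seg m x) {i : Fin n} (hi : seg i ≠ m)
    (h0 : x i ≠ 0) (hsi : single seg x i) (hz : occ seg x (seg i) 0) (hm0 : occ seg x m 0)
    (hma : occ seg x m |x i|) (hQ0 : ∀ k, ¬ Qk seg m x k 0)
    (hm : ∃ k, Qk seg m x k |x i|) : C x (flip i x) := by
  rcases min_layer hm with h | ⟨k, hk, hk1⟩
  · exact absurd hma (room_m' h)
  rcases hk1 with hk1 | ⟨t, s, ht, ho, hr⟩
  · exact absurd hk1 hk
  obtain ⟨x', hx', hns, hc, hd, he⟩ := claimQ M hx k t ht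
  refine he i hk hsi ?_
  have hxi : x' i = x i := hc i (Or.inl hk)
  have hi0 : x' i ≠ 0 := by rw [hxi]; exact h0
  have hsm : s ≠ m := by rintro rfl; exact hk (Qk_zero hr k)
  have ht0 : t ≠ 0 := by rintro rfl; exact hQ0 k ht
  have hta : t ≠ |x' i| := by rw [hxi]; rintro rfl; exact hk ht
  have keep0 : ∀ u, x u = 0 → x' u = 0 := fun u hu => by
    rw [hc u (Or.inl (by rw [hu, abs_zero]; exact hQ0 k)), hu]
  obtain ⟨p, hp, hp0⟩ := hz
  have hp0 := keep0 p (abs_eq_zero.mp hp0)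
  obtain ⟨l, hl, hl0⟩ := hm0
  have hl0 := keep0 l (abs_eq_zero.mp hl0)
  obtain ⟨q, hq, hqa⟩ := hma
  have hxq : x' q = x q := hc q (Or.inl (by rw [hqa]; exact hk))
  have hqa' : |x' q| = |x' i| := by rw [hxq, hxi, hqa]
  have hq0 : x' q ≠ 0 := by rw [← abs_ne_zero, hqa', abs_ne_zero]; exact hi0
  obtain ⟨j, hj, hjt⟩ := hd s hsm ho
  have hj0 : x' j ≠ 0 := by rw [← abs_ne_zero, hjt]; exact ht0
  have hjm : seg j ≠ m := by rw [hj]; exact hsm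
  have hqj : seg q ≠ seg j := by rw [hq]; exact hjm.symm
  have nqj : q ≠ j := fun h => hqj (by rw [h])
  have nij : i ≠ j := by rintro rfl; exact hta hjt.symm
  have nip : i ≠ p := fun h => hi0 (by rw [h, hp0])
  have niq : i ≠ q := fun h => hi (by rw [h, hq])
  have npj : p ≠ j := by rintro rfl; exact hj0 hp0
  have npq : p ≠ q := by rintro rfl; exact hq0 hp0
  have hab : |x' q| ≠ |x' j| := by rw [hqa', hjt]; exact hta.symm
  have hroom : room seg m x' s |x' i| := by
    rw [hxi]
    rcases hr with ⟨a, v, hv, hv'⟩ | ⟨a, _⟩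
    · refine Or.inl ⟨a, v, hv, fun i hi h => hv' i hi ?_⟩
      rw [← hc i (Or.inr (by rw [h, hv]; exact hk)), h]
    · exact absurd a hsm
  have hsi' : single seg x' i := by
    intro u hu hus hua
    have : x' u = x u := hc u (Or.inr (by rw [hua, hxi]; exact hk))
    rw [this, hxi] at hua
    exact hsi u hu hus hua
  have hm0' : occ seg x' m 0 := ⟨l, hl, by rw [hl0, abs_zero]⟩
  by_cases hss : s = seg i
  · by_cases sj : single seg x' j
    · refine tr_inn M (by rw [hj, hss]) hi nij (by rw [hjt]; exact hta.symm) hi0 hj0 hx' hsi' sj ?_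
      exact M.in0 x' j p (by rw [hj, hp, hss]) hjm hj0 hp0
        (fun h => hns (by rw [← hjt]; exact h.2)) hx' (hx'.flip sj)
    · unfold single at sj
      push Not at sj
      obtain ⟨j', hj', hjs', hjj⟩ := sj
      have hj2 : x' j' = - x' j := by
        rcases abs_eq_abs.mp hjj with h | h
        · exact absurd h (hx' j' j hj' hjs').1
        · exact h
      have cq : C x' (flip q x') := fl_m0 M hq hq0 hx' hm0'
      have hfx : Reg seg m (flip i x') := hx'.flip hsi'
      have cq' : C (flip i x') (flip q (flip i x')) :=
        fl_m0 M hq (by rw [← abs_ne_zero, abs_flip, abs_ne_zero]; exact hq0) hfx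
          (by rw [occ_flip]; exact hm0')
      -- normalise the sign of q
      have hsw : ∀ z : V n, z = x' ∨ z = flip q x' → z q = - x' i →
          ∃ w, C z w ∧ (w = flip i x' ∨ w = flip q (flip i x')) := by
        intro z hzz hzq
        have hz : Reg seg m z := by
          rcases hzz with h | h
          · rw [h]; exact hx'
          · rw [h]; exact hx'.flip (single_m hx' hq)
        have zo : ∀ k, k ≠ q → z k = x' k := fun k hkq => by
          rcases hzz with h | h
          · rw [h]
          · rw [h]; simp [flip, hkq]
        have za : ∀ k, |z k| = |x' k| := fun k => by
          rcases hzz with h | h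
          · rw [h]
          · rw [h, abs_flip]
        have hij : seg i = seg j := by rw [hj, hss]
        have hqi : seg i ≠ seg q := by rw [hq]; exact hi
        have hy : Reg seg m (op q j 1 z) := by
          refine reg_op hz hqj (fun k hk hks => ⟨fun h => hns ⟨k, hks.trans hq, ?_⟩,
            fun _ h => hns ⟨k, hks.trans hq, ?_⟩⟩)
            (fun k hk hks => ⟨fun h => ?_, fun h => absurd h hjm⟩)
          · rw [← za, h, one_mul, za, hjt]
          · rw [← za, h, one_mul, abs_neg, za, hjt]
          · rw [one_mul, hzq] at h
            have hkq : k ≠ q := by rintro rfl; exact hqj hks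
            rw [zo k hkq] at h
            by_cases hki : k = i
            · subst hki; exact hi0 (by linarith)
            · exact hsi' k hki (hks.trans hij.symm) (by rw [h, abs_neg])
        have c1 := M.ex z q j 1 (Or.inl rfl) hqj (by rw [za, za]; exact hab) hz hy
        set y := op q j 1 z with hydef
        have yq : y q = x' j := by rw [hydef, op_p, one_mul, zo j nqj.symm]
        have yj : y j = - x' i := by rw [hydef, op_q nqj, one_mul, hzq]
        have yo : ∀ k, k ≠ q → k ≠ j → y k = x' k := fun k h1 h2 => by
          rw [hydef, op_o h1 h2, zo k h1]
        have yi : y i = x' i := yo i niq nij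
        have hw : Reg seg m (op i q 1 y) := by
          refine reg_op hy hqi (fun k hk hks => ⟨fun h => ?_, fun h => absurd h hi⟩)
            (fun k hk hks => ⟨fun h => ?_, fun _ h => ?_⟩)
          · rw [one_mul, yq] at h
            have hkq : k ≠ q := by rintro rfl; exact hqi hks.symm
            by_cases hkj : k = j
            · rw [hkj, yj] at h; apply hta; rw [← hjt, ← h, abs_neg]
            · rw [yo k hkq hkj] at h
              exact (hx' k j hkj (hks.trans hij)).1 h
          · rw [one_mul, yi] at h
            have hkj : k ≠ j := by rintro rfl; exact hqj hks.symm
            rw [yo k hk hkj] at h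
            exact single_m hx' hq k hk hks (by rw [h, hqa'])
          · rw [one_mul, yi] at h
            have hkj : k ≠ j := by rintro rfl; exact hqj hks.symm
            rw [yo k hk hkj] at h
            exact single_m hx' hq k hk hks (by rw [h, abs_neg, hqa'])
        have c2 := M.ex y i q 1 (Or.inl rfl) hqi (by rw [yi, yq, hjt]; exact hta.symm) hy hw
        have c3 := M.perm _ i j hij nij hw
        refine ⟨_, M.trans _ _ _ c1 (M.trans _ _ _ c2 c3), ?_⟩
        have hall : ∀ k, k ≠ q → op i j 1 (op i q 1 y) k = flip i x' k := by
          intro k hkq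
          by_cases h1 : k = i
          · subst h1
            rw [op_p, op_o nij.symm nqj.symm, yj]; simp [flip]
          · by_cases h2 : k = j
            · subst h2
              rw [op_q nij, op_p, yq]; simp [flip, nij.symm]
            · rw [op_o h1 h2, op_o h1 hkq, yo k hkq h2]; simp [flip, h1]
        have hqq : op i j 1 (op i q 1 y) q = x' i := by
          rw [op_o niq.symm nqj, op_q niq, yi, one_mul]
        rcases abs_eq_abs.mp hqa' with h | h
        · left
          funext k
          by_cases hkq : k = q
          · subst hkq; rw [hqq]; simp [flip, niq.symm, h]
          · exact hall k hkq
        · right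
          funext k
          by_cases hkq : k = q
          · subst hkq; rw [hqq]; simp [flip, niq.symm, h]
          · rw [hall k hkq]; simp [flip, hkq]
      have fin : ∀ w, (w = flip i x' ∨ w = flip q (flip i x')) → C w (flip i x') := by
        intro w hw
        rcases hw with rfl | rfl
        · exact M.trans _ _ _ cq' (M.symm _ _ cq')
        · exact M.symm _ _ cq'
      rcases abs_eq_abs.mp hqa' with h | h
      · obtain ⟨w, hw, hw'⟩ := hsw (flip q x') (Or.inr rfl) (by simp [flip, h])
        exact M.trans _ _ _ cq (M.trans _ _ _ hw (fin w hw'))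
      · obtain ⟨w, hw, hw'⟩ := hsw x' (Or.inl rfl) h
        exact M.trans _ _ _ hw (fin w hw')
  · obtain ⟨e, he1, hy⟩ := exchM hq hjm hx' (by rw [hj, hqa']; exact hroom) (by rw [hjt]; exact hns)
    have hae : |e| = 1 := by rcases he1 with h | h <;> simp [h]
    have s2 : single seg (op q j e x') i := by
      intro u hu hus
      rw [op_o niq nij]
      have g1 : u ≠ q := by rintro rfl; exact hi (by rw [← hus, hq])
      have g2 : u ≠ j := by rintro rfl; exact hss (by rw [← hus, hj])
      rw [op_o g1 g2]; exact hsi' u hu hus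
    refine conj M he1 hqj hab hx' hy niq nij hsi' s2 ?_
    refine M.in0 _ i p hp.symm hi (by rw [op_o niq nij]; exact hi0) (by rw [op_o npq npj]; exact hp0)
      ?_ hy (hy.flip s2)
    rintro ⟨-, u, hu, hua⟩
    rw [op_o niq nij] at hua
    by_cases g1 : u = q
    · rw [g1, op_p, abs_mul, hae, one_mul, hjt] at hua; exact hta hua
    · have g2 : u ≠ j := by rintro rfl; exact hjm hu
      rw [op_o g1 g2] at hua
      exact single_m hx' hq u g1 (hu.trans hq.symm) (by rw [hua, hqa'])

/-- closed sets of the residual digraph -/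
def Closed {n : ℕ} (seg : Fin n → ℕ) (m : ℕ) (x : V n) (P : ℕ → Prop) (Q : ℝ → Prop) : Prop :=
  (∀ s t, P s → room seg m x s t → Q t) ∧ (∀ s t, Q t → occ seg x s t → P s)

theorem core (M : Moves seg m C) {x : V n} (hx : Reg seg m x) {i : Fin n}
    (h0 : x i ≠ 0) (hsi : single seg x i)
    (hY : ∀ P Q, Closed seg m x P Q → ¬ P m → Q 0 → Q |x i|)
    (hX : ∀ P Q, Closed seg m x P Q → P m → ¬ Q 0 → seg i ≠ m →
      ((∀ s, 1 ≤ s → s ≤ m → P s → s = m) ∧ ∀ j, ¬ Q |x j|) ∨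
      ((∀ s, 1 ≤ s → s ≤ m → P s) ∧ ∀ j, x j ≠ 0 → Q |x j|))
    (hseg : ∀ j, 1 ≤ seg j ∧ seg j ≤ m)
    (h2 : seg i ≠ m → ¬ ((∀ s, 1 ≤ s → s ≤ m → occ seg x s 0) ∧ ∀ j, occ seg x m |x j|)) :
    C x (flip i x) := by
  -- reach set of the zero column
  let Y : ℕ → Prop := fun s => ∃ k, Rk seg m x k s
  let YQ : ℝ → Prop := fun t => t = 0 ∨ ∃ s, Y s ∧ room seg m x s t
  have clY : Closed seg m x Y YQ := by
    refine ⟨fun s t hs hr => Or.inr ⟨s, hs, hr⟩, fun s t hq ho => ?_⟩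
    rcases hq with rfl | ⟨s', ⟨k, hk⟩, hr⟩
    · exact ⟨0, ho⟩
    · exact ⟨k+1, Or.inr ⟨s', t, hk, hr, ho⟩⟩
  have hYm : Y m ∨ YQ |x i| := by
    by_cases h : Y m
    · exact Or.inl h
    · exact Or.inr (hY Y YQ clY h (Or.inl rfl))
  have hYi : Y m ∨ Y (seg i) := hYm.imp id (fun h => clY.2 _ _ h ⟨i, rfl, rfl⟩)
  by_cases him : seg i = m
  · exact rowM M hx him h0 (by rw [him] at hYi; exact hYi.elim id id)
  by_cases hz : occ seg x (seg i) 0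
  swap
  · by_cases hs : Y (seg i)
    · exact case2 M hx him h0 hsi hz hs
    · have hm : Y m := hYi.resolve_right hs
      have : occ seg x m |x i| := by
        by_contra h
        exact hs (clY.2 _ _ (clY.1 m _ hm (room_m h)) ⟨i, rfl, rfl⟩)
      obtain ⟨q, hq, hqa⟩ := this
      exact tr_flm M him hq hqa.symm h0 (fun h => hz h.1) hx hsi
        (rowM M hx hq (by rw [← abs_ne_zero, hqa, abs_ne_zero]; exact h0) hm)
  by_cases hexc : occ seg x m 0 ∧ occ seg x m |x i|
  swap
  · obtain ⟨p, hp, hp0⟩ := hz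
    exact M.in0 x i p hp.symm him h0 (abs_eq_zero.mp hp0) hexc hx (hx.flip hsi)
  obtain ⟨hm0, hma⟩ := hexc
  by_cases hL : ∃ k, Lk seg m x k (seg i)
  · exact case3L M hx him h0 hsi hz hL
  -- complement of the coreach set of the zero column
  let P1 : ℕ → Prop := fun s => ¬ ∃ k, Lk seg m x k s
  let Q1 : ℝ → Prop := fun t => t ≠ 0 ∧ ∀ s, (∃ k, Lk seg m x k s) → ¬ occ seg x s t
  have cl1 : Closed seg m x P1 Q1 := by
    constructor
    · intro s t hs hr
      refine ⟨?_, ?_⟩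
      · rintro rfl; exact hs ⟨0, room_zero hr⟩
      · rintro s' ⟨k, hk⟩ ho; exact hs ⟨k+1, Or.inr ⟨t, s', hr, hk, ho⟩⟩
    · intro s t hq ho hs; exact hq.2 s hs ho
  have hP1m : P1 m := cl1.2 m _ (cl1.1 (seg i) _ hL (room_of_single him h0 hsi)) hma
  rcases hX P1 Q1 cl1 hP1m (fun h => h.1 rfl) him with ⟨h, _⟩ | ⟨hall, _⟩
  · exact absurd (h (seg i) (hseg i).1 (hseg i).2 hL) him
  have hall0 : ∀ s, 1 ≤ s → s ≤ m → occ seg x s 0 := by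
    intro s h1 h2
    by_contra h
    exact hall s h1 h2 ⟨0, h⟩
  -- reach set of the last row
  let Q2 : ℝ → Prop := fun t => ∃ k, Qk seg m x k t
  let P2 : ℕ → Prop := fun s => s = m ∨ ∃ t, Q2 t ∧ occ seg x s t
  have cl2 : Closed seg m x P2 Q2 := by
    constructor
    · rintro s t (rfl | ⟨t', ⟨k, hk⟩, ho⟩) hr
      · exact ⟨0, hr⟩
      · exact ⟨k+1, Or.inr ⟨t', s, hk, ho, hr⟩⟩
    · intro s t hq ho; exact Or.inr ⟨t, hq, ho⟩
  have hQ0 : ∀ k, ¬ Qk seg m x k 0 := by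
    intro k
    induction k with
    | zero => exact fun h => room_m' h hm0
    | succ k ih =>
      rintro (h | ⟨t, s, _, ⟨j, hj, _⟩, hr⟩)
      · exact ih h
      · have := hseg j
        rw [hj] at this
        exact room_zero hr (hall0 s this.1 this.2)
  have hQ20 : ¬ Q2 0 := fun ⟨k, hk⟩ => hQ0 k hk
  rcases hX P2 Q2 cl2 (Or.inl rfl) hQ20 him with ⟨_, h⟩ | ⟨_, h⟩
  · refine absurd ⟨hall0, fun j => ?_⟩ (h2 him)
    by_contra hj
    exact h j ⟨0, room_m hj⟩
  · exact case3Q M hx him h0 hsi hz hm0 hma hQ0 (h i h0)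

end Core4

section Out1

variable {n : ℕ}

theorem inn_comb (x : V n) (i j : Fin n) (a b : ℝ) :
    JantzenBlocks.inn x (a • ee i + b • ee j) = a * x i + b * x j := by
  simp [JantzenBlocks.inn, ee, Pi.single_apply, mul_add, Finset.sum_add_distrib]
  ring

theorem inn_sub' (x : V n) (i j : Fin n) : JantzenBlocks.inn x (ee i - ee j) = x i - x j := by
  have := inn_comb x i j 1 (-1)
  simp only [one_smul, neg_smul, ← sub_eq_add_neg] at this
  rw [this]; ring

theorem inn_add' (x : V n) (i j : Fin n) : JantzenBlocks.inn x (ee i + ee j) = x i + x j := by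
  have := inn_comb x i j 1 1
  simp only [one_smul] at this
  rw [this]; ring

theorem inn_ee (x : V n) (i : Fin n) : JantzenBlocks.inn x (ee i) = x i := by
  simp [JantzenBlocks.inn, ee, Pi.single_apply]

theorem sRefl_ee (x : V n) (i : Fin n) : sRefl (ee i) x = flip i x := by
  funext k
  simp only [sRefl, inn_ee, flip, Pi.sub_apply, Pi.smul_apply, smul_eq_mul]
  by_cases h : k = i
  · subst h; simp [ee]; ring
  · simp [ee, Pi.single_apply, h]

/-- the root `e_i - e * e_j` -/
def rt (i j : Fin n) (e : ℝ) : V n := ee i - e • ee j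

theorem sRefl_rt (x : V n) {i j : Fin n} (hij : i ≠ j) {e : ℝ} (he : e = 1 ∨ e = -1) :
    sRefl (rt i j e) x = op i j e x := by
  have h1 : ∀ y : V n, JantzenBlocks.inn y (rt i j e) = y i - e * y j := by
    intro y
    have := inn_comb y i j 1 (-e)
    simp only [one_smul, neg_smul, ← sub_eq_add_neg] at this
    unfold rt
    rw [this]; ring
  have hee : e * e = 1 := by rcases he with h | h <;> rw [h] <;> norm_num
  funext k
  simp only [sRefl, h1, Pi.sub_apply, Pi.smul_apply, smul_eq_mul]
  have h2 : rt i j e i - e * rt i j e j = 2 := by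
    simp [rt, ee, Pi.single_apply, hij, hij.symm]; linarith
  rw [h2]
  unfold op
  by_cases hk : k = i
  · subst hk; simp [rt, ee, Pi.single_apply, hij]
  · by_cases hk' : k = j
    · subst hk'; simp [rt, ee, Pi.single_apply, hk]; linear_combination (-x k) * hee
    · simp [rt, ee, Pi.single_apply, hk, hk']

theorem rt_one (i j : Fin n) : rt i j 1 = ee i - ee j := by simp [rt]
theorem rt_neg (i j : Fin n) : rt i j (-1) = ee i + ee j := by simp [rt]

theorem op_symm {i j : Fin n} {e : ℝ} (x : V n) : op i j e x = op j i e x := by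
  funext k; unfold op
  by_cases h : k = i
  · by_cases h' : k = j
    · have : i = j := h.symm.trans h'
      subst this; rfl
    · simp [h, h']; intro hh; exact absurd (h.trans hh) h'
  · by_cases h' : k = j
    · simp [h', h]; intro hh; exact absurd (h'.trans hh) h
    · simp [h, h']

theorem op_op {i j : Fin n} (hij : i ≠ j) {e : ℝ} (he : e = 1 ∨ e = -1) (x : V n) :
    op i j e (op i j e x) = x := by
  have hee : e * e = 1 := by rcases he with h | h <;> rw [h] <;> norm_num
  funext k
  by_cases h : k = i
  · subst h; rw [op_p, op_q hij, ← mul_assoc, hee, one_mul]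
  · by_cases h' : k = j
    · subst h'; rw [op_q hij, op_p, ← mul_assoc, hee, one_mul]
    · rw [op_o h h', op_o h h']

/-- conjugating by a transposition -/
theorem op_conj {i j k : Fin n} (hij : i ≠ j) (hik : i ≠ k) (hjk : j ≠ k) (e : ℝ) (x : V n) :
    op j k 1 (op i j e (op j k 1 x)) = op i k e x := by
  funext l
  unfold op
  by_cases h1 : l = i <;> by_cases h2 : l = j <;> by_cases h3 : l = k <;>
    simp_all [Ne.symm]

theorem op_op_neg {i j : Fin n} (hij : i ≠ j) (x : V n) :
    op i j 1 (op i j (-1) x) = flip i (flip j x) := by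
  funext l
  unfold op flip
  by_cases h1 : l = i <;> by_cases h2 : l = j <;>
    simp_all [Ne.symm]

theorem alphaR_lt {i : Fin n} (h : i.1 + 1 < n) :
    alphaR n CType.D i = rt i ⟨i.1 + 1, h⟩ 1 := by
  rw [rt_one]; simp [alphaR, h]

theorem alphaR_last {i : Fin n} (h : ¬ i.1 + 1 < n) :
    alphaR n CType.D i = rt ⟨n - 2, Nat.sub_lt i.pos (by norm_num)⟩ i (-1) := by
  rw [rt_neg]; simp [alphaR, h]

end Out1

section Out2

variable {n : ℕ}

def cnt (I : Finset (Fin n)) (k : ℕ) : ℕ := ((Finset.univ \ I).filter (fun j => j.1 < k)).card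

def sg (I : Finset (Fin n)) (i : Fin n) : ℕ := 1 + cnt I i.1

theorem mval_eq (I : Finset (Fin n)) : mval n I = (Finset.univ \ I).card + 1 := by
  simp [mval, Qlist]

theorem qval_lt (I : Finset (Fin n)) {s : ℕ} (h1 : 1 ≤ s) (h2 : s < mval n I) (k : ℕ) :
    k < qval n I s ↔ cnt I k < s := by
  have hc : s - 1 < (Finset.univ \ I).card := by rw [mval_eq] at h2; omega
  have h3 : qval n I s = ((Finset.univ \ I).orderEmbOfFin rfl ⟨s - 1, hc⟩).1 + 1 := by
    unfold qval
    rw [if_neg (by omega), if_pos h2]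
    simp only [Qlist, Finset.orderEmbOfFin_apply]
    rw [List.getD_eq_getElem _ _ (by simpa using hc)]
    simp
  set f := (Finset.univ \ I).orderEmbOfFin rfl with hf
  have h4 : cnt I k = (Finset.univ.filter (fun a => (f a).1 < k)).card := by
    unfold cnt
    rw [← Finset.card_map f.toEmbedding]
    congr 1
    ext j
    simp only [Finset.mem_filter, Finset.mem_map, Finset.mem_univ, true_and]
    constructor
    · rintro ⟨hj, hjk⟩
      have : j ∈ Set.range f := by
        rw [hf, Finset.range_orderEmbOfFin]; exact hj
      obtain ⟨a, ha⟩ := this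
      exact ⟨a, by rw [ha]; exact hjk, ha⟩
    · rintro ⟨a, ha, rfl⟩
      exact ⟨Finset.orderEmbOfFin_mem _ _ _, ha⟩
  rw [h3, h4]
  constructor
  · intro hk
    have : (Finset.univ.filter (fun a => (f a).1 < k)) ⊆ Finset.univ.filter (fun a => a < ⟨s - 1, hc⟩) := by
      intro a ha
      simp only [Finset.mem_filter, Finset.mem_univ, true_and] at ha ⊢
      by_contra hcon
      have := f.monotone (not_lt.mp hcon)
      have : (f ⟨s-1,hc⟩).1 ≤ (f a).1 := this
      omega
    have := Finset.card_le_card this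
    have e : (Finset.univ.filter (fun a : Fin (Finset.univ \ I).card => a < ⟨s - 1, hc⟩)).card = s - 1 := by
      rw [show Finset.univ.filter (fun a : Fin (Finset.univ \ I).card => a < ⟨s - 1, hc⟩)
        = Finset.Iio ⟨s - 1, hc⟩ by ext; simp, Fin.card_Iio]
    omega
  · intro hk
    by_contra hcon
    have : Finset.univ.filter (fun a => a ≤ ⟨s - 1, hc⟩) ⊆ (Finset.univ.filter (fun a => (f a).1 < k)) := by
      intro a ha
      simp only [Finset.mem_filter, Finset.mem_univ, true_and] at ha ⊢
      have := f.monotone ha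
      have : (f a).1 ≤ (f ⟨s-1,hc⟩).1 := this
      omega
    have := Finset.card_le_card this
    have e : (Finset.univ.filter (fun a : Fin (Finset.univ \ I).card => a ≤ ⟨s - 1, hc⟩)).card = s - 1 + 1 := by
      rw [show Finset.univ.filter (fun a : Fin (Finset.univ \ I).card => a ≤ ⟨s - 1, hc⟩)
        = Finset.Iic ⟨s - 1, hc⟩ by ext; simp, Fin.card_Iic]
    omega

theorem cnt_le (I : Finset (Fin n)) (k : ℕ) : cnt I k ≤ mval n I - 1 := by
  rw [mval_eq]; exact Finset.card_filter_le _ _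

theorem cnt_mono (I : Finset (Fin n)) {k l : ℕ} (h : k ≤ l) : cnt I k ≤ cnt I l := by
  apply Finset.card_le_card
  intro j; simp only [Finset.mem_filter]; rintro ⟨h1, h2⟩; exact ⟨h1, by omega⟩

theorem cnt_succ (I : Finset (Fin n)) (i : Fin n) :
    cnt I (i.1 + 1) = cnt I i.1 + if i ∈ I then 0 else 1 := by
  unfold cnt
  by_cases h : i ∈ I
  · rw [if_pos h, add_zero]
    congr 1; ext j
    simp only [Finset.mem_filter, Finset.mem_sdiff, Finset.mem_univ, true_and]
    constructor
    · rintro ⟨h1, h2⟩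
      refine ⟨h1, ?_⟩
      rcases Nat.lt_succ_iff_lt_or_eq.mp h2 with h3 | h3
      · exact h3
      · exact absurd (Fin.ext h3 ▸ h) h1
    · rintro ⟨h1, h2⟩; exact ⟨h1, by omega⟩
  · rw [if_neg h]
    rw [← Finset.card_insert_of_notMem (a := i) (by simp)]
    congr 1; ext j
    simp only [Finset.mem_filter, Finset.mem_sdiff, Finset.mem_univ, true_and, Finset.mem_insert]
    constructor
    · rintro ⟨h1, h2⟩
      rcases Nat.lt_succ_iff_lt_or_eq.mp h2 with h3 | h3
      · exact Or.inr ⟨h1, h3⟩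
      · exact Or.inl (Fin.ext h3)
    · rintro (rfl | ⟨h1, h2⟩)
      · exact ⟨h, by omega⟩
      · exact ⟨h1, by omega⟩

theorem cnt_n (I : Finset (Fin n)) : cnt I n = mval n I - 1 := by
  rw [mval_eq]; unfold cnt
  rw [Finset.filter_true_of_mem (fun j _ => j.2)]; rfl

theorem sg_range (I : Finset (Fin n)) (i : Fin n) : 1 ≤ sg I i ∧ sg I i ≤ mval n I := by
  have := cnt_le I i.1
  have h := mval_eq I
  unfold sg; omega

theorem sg_mono (I : Finset (Fin n)) {i j : Fin n} (h : i.1 ≤ j.1) : sg I i ≤ sg I j := by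
  have := cnt_mono I h
  unfold sg; omega

theorem sg_succ (I : Finset (Fin n)) {i : Fin n} (h : i.1 + 1 < n) :
    sg I ⟨i.1 + 1, h⟩ = sg I i ↔ i ∈ I := by
  have := cnt_succ I i
  unfold sg; simp only
  split_ifs at this with hi <;> simp [hi] <;> omega

theorem sg_last (I : Finset (Fin n)) {i : Fin n} (h : ¬ i.1 + 1 < n) :
    sg I i = mval n I ↔ i ∈ I := by
  have h1 := cnt_succ I i
  have h2 : i.1 + 1 = n := by have := i.2; omega
  rw [h2, cnt_n] at h1
  have h3 := mval_eq I
  unfold sg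
  split_ifs at h1 with hi <;> simp [hi] <;> omega

theorem qv_m (I : Finset (Fin n)) : qv n CType.D I (mval n I) = n := by
  have h3 := mval_eq I
  unfold qv qval
  rw [if_neg (by omega), if_neg (by omega), if_neg (by omega)]

theorem qv_zero (I : Finset (Fin n)) : qv n CType.D I 0 = 0 ∨ mval n I = 1 := by
  have h3 := mval_eq I
  unfold qv qval
  by_cases h : mval n I = 1
  · exact Or.inr h
  · left; rw [if_neg (by omega)]; simp

/-- characterization of segments from the cut points -/
theorem inSeg_of {I I' : Finset (Fin n)} (hm : mval n I' = mval n I)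
    (h0 : qv n CType.D I 0 = 0)
    (h : ∀ s, 1 ≤ s → s < mval n I → ∀ i : Fin n, i.1 < qv n CType.D I s ↔ cnt I' i.1 < s)
    (s : ℕ) (h1 : 1 ≤ s) (h2 : s ≤ mval n I) (i : Fin n) :
    InSeg n CType.D I s i ↔ sg I' i = s := by
  have hc := cnt_le I' i.1
  rw [hm] at hc
  unfold InSeg sg
  have hA : i.1 + 1 ≤ qv n CType.D I s ↔ cnt I' i.1 < s := by
    rcases Nat.lt_or_eq_of_le h2 with h3 | h3
    · rw [← h s h1 h3 i]; omega
    · rw [h3, qv_m]; have := i.2; omega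
  have hB : qv n CType.D I (s-1) < i.1 + 1 ↔ ¬ cnt I' i.1 < s - 1 := by
    rcases Nat.eq_or_lt_of_le h1 with h3 | h3
    · rw [← h3]; simp only [Nat.sub_self, h0]; omega
    · rw [← h (s-1) (by omega) (by omega) i]; omega
  rw [hA, hB]; omega

theorem qv_std {I : Finset (Fin n)} (h : StandardI n CType.D I) (s : ℕ) :
    qv n CType.D I s = qval n I s := by
  unfold qv; rw [if_neg (by tauto)]

theorem inSeg_std {I : Finset (Fin n)} (h : StandardI n CType.D I)
    (s : ℕ) (h1 : 1 ≤ s) (h2 : s ≤ mval n I) (i : Fin n) :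
    InSeg n CType.D I s i ↔ sg I i = s := by
  refine inSeg_of rfl ?_ ?_ s h1 h2 i
  · rw [qv_std h]; simp [qval]
  · intro s h1 h2 i
    rw [qv_std h, qval_lt I h1 h2]

theorem swapLast_invol (hn : 2 ≤ n) (j : Fin n) : swapLast n (swapLast n j) = j := by
  unfold swapLast
  apply Fin.ext
  split_ifs <;> simp_all <;> omega

theorem mem_phiIdx (hn : 2 ≤ n) (I : Finset (Fin n)) (j : Fin n) :
    j ∈ phiIdx n I ↔ swapLast n j ∈ I := by
  unfold phiIdx
  rw [Finset.mem_image]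
  constructor
  · rintro ⟨k, hk, rfl⟩; rw [swapLast_invol hn]; exact hk
  · intro h; exact ⟨_, h, swapLast_invol hn j⟩

theorem phiIdx_invol (hn : 2 ≤ n) (I : Finset (Fin n)) : phiIdx n (phiIdx n I) = I := by
  ext j; rw [mem_phiIdx hn, mem_phiIdx hn, swapLast_invol hn]

theorem mval_phiIdx (hn : 2 ≤ n) (I : Finset (Fin n)) : mval n (phiIdx n I) = mval n I := by
  have : (phiIdx n I).card = I.card :=
    Finset.card_image_of_injective _ (fun a b h => by
      rw [← swapLast_invol hn a, h, swapLast_invol hn])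
  rw [mval_eq, mval_eq, Finset.card_sdiff_of_subset (Finset.subset_univ _),
    Finset.card_sdiff_of_subset (Finset.subset_univ _), this]

theorem nonstd {I : Finset (Fin n)} (h : ¬ StandardI n CType.D I) :
    ∃ hn : 2 ≤ n, (⟨n - 2, by omega⟩ : Fin n) ∉ I ∧ (⟨n - 1, by omega⟩ : Fin n) ∈ I := by
  unfold StandardI at h
  push Not at h
  obtain ⟨_, hn, h⟩ := h
  exact ⟨hn, h⟩

theorem std_phiIdx {I : Finset (Fin n)} (h : ¬ StandardI n CType.D I) :
    StandardI n CType.D (phiIdx n I) := by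
  obtain ⟨hn, h1, h2⟩ := nonstd h
  intro _ _
  left
  rw [mem_phiIdx hn]
  have : swapLast n ⟨n-2, by omega⟩ = ⟨n-1, by omega⟩ := by
    unfold swapLast; rw [if_neg (by simp; omega), if_pos (by simp)]
  rw [this]; exact h2

theorem cnt_phiIdx (hn : 2 ≤ n) (I : Finset (Fin n)) {k : ℕ} (hk : k ≤ n - 2) :
    cnt (phiIdx n I) k = cnt I k := by
  unfold cnt
  congr 1; ext j
  simp only [Finset.mem_filter, Finset.mem_sdiff, Finset.mem_univ, true_and, mem_phiIdx hn]
  refine and_congr_left fun h => ?_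
  have : swapLast n j = j := by
    unfold swapLast; rw [if_neg (by omega), if_neg (by omega)]
  rw [this]

theorem inSeg_nonstd {I : Finset (Fin n)} (h : ¬ StandardI n CType.D I)
    (s : ℕ) (h1 : 1 ≤ s) (h2 : s ≤ mval n I) (i : Fin n) :
    InSeg n CType.D I s i ↔ sg (phiIdx n I) i = s := by
  obtain ⟨hn, g1, g2⟩ := nonstd h
  have hm := mval_phiIdx hn I
  have e1 := cnt_succ I ⟨n-2, by omega⟩
  rw [if_neg g1] at e1
  have e2 := cnt_succ I ⟨n-1, by omega⟩
  rw [if_pos g2] at e2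
  have f1 := cnt_succ (phiIdx n I) ⟨n-2, by omega⟩
  have f2 := cnt_succ (phiIdx n I) ⟨n-1, by omega⟩
  have s1 : swapLast n ⟨n-2, by omega⟩ = ⟨n-1, by omega⟩ := by
    unfold swapLast; rw [if_neg (by simp; omega), if_pos (by simp)]
  have s2 : swapLast n ⟨n-1, by omega⟩ = ⟨n-2, by omega⟩ := by
    unfold swapLast; rw [if_pos (by simp)]
  rw [if_pos (by rw [mem_phiIdx hn, s1]; exact g2)] at f1
  rw [if_neg (by rw [mem_phiIdx hn, s2]; exact g1)] at f2
  have c1 := cnt_phiIdx hn I (le_refl (n-2))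
  have cn := cnt_n I
  have cn' := cnt_n (phiIdx n I)
  have p1 : n - 2 + 1 = n - 1 := by omega
  have p2 : n - 1 + 1 = n := by omega
  simp only [p1, p2] at e1 e2 f1 f2
  refine inSeg_of hm ?_ ?_ s h1 h2 i
  · rcases qv_zero I with h | h
    · exact h
    · omega
  · intro s h1 h2 i
    by_cases hs : s = mval n I - 1
    · unfold qv; rw [if_pos ⟨h, hs⟩]
      have := cnt_mono (phiIdx n I) (show i.1 ≤ n - 1 by have := i.2; omega)
      have := i.2
      omega
    · unfold qv; rw [if_neg (by tauto), qval_lt I h1 h2]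
      by_cases hi : i.1 ≤ n - 2
      · rw [cnt_phiIdx hn I hi]
      · have : i.1 = n - 1 := by have := i.2; omega
        rw [this]; omega

end Out2

section Out3

variable {n : ℕ}

theorem std_last {I : Finset (Fin n)} (hn : 2 ≤ n) (hI : StandardI n CType.D I)
    {i : Fin n} (hi : sg I i = mval n I) :
    sg I ⟨n - 1, by omega⟩ = mval n I ∧ sg I ⟨n - 2, by omega⟩ = mval n I ∧
      (⟨n - 1, by omega⟩ : Fin n) ∈ I ∧ (⟨n - 2, by omega⟩ : Fin n) ∈ I := by
  have h1 := sg_mono I (i := i) (j := ⟨n-1, by omega⟩) (by simp; have := i.2; omega)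
  have h2 := (sg_range I ⟨n-1, by omega⟩).2
  have h3 : sg I ⟨n-1, by omega⟩ = mval n I := by omega
  have h4 := (sg_last I (i := ⟨n-1, by omega⟩) (by simp; omega)).mp h3
  have h5 : (⟨n - 2, by omega⟩ : Fin n) ∈ I := by
    rcases hI rfl hn with h | h
    · exact h
    · exact absurd h4 h
  have h6 := (sg_succ I (i := ⟨n-2, by omega⟩) (by simp; omega)).mpr h5
  have h7 : (⟨n - 2 + 1, by omega⟩ : Fin n) = ⟨n-1, by omega⟩ := Fin.ext (by simp; omega)
  simp only [h7] at h6
  exact ⟨h3, by rw [← h6]; exact h3, h4, h5⟩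

abbrev spn (I : Finset (Fin n)) : Submodule ℝ (V n) :=
  Submodule.span ℝ (alphaR n CType.D '' (I : Set (Fin n)))

theorem span_sub_aux (I : Finset (Fin n)) : ∀ (d : ℕ) (i j : Fin n), j.1 = i.1 + d →
    sg I i = sg I j → ee i - ee j ∈ spn I := by
  intro d
  induction d with
  | zero => intro i j h _; rw [show j = i from Fin.ext (by omega)]; simp
  | succ d ih =>
    intro i j h hs
    have hlt : i.1 + 1 < n := by have := j.2; omega
    have a1 := sg_mono I (i := i) (j := ⟨i.1+1, hlt⟩) (by simp)
    have a2 := sg_mono I (i := ⟨i.1+1, hlt⟩) (j := j) (by simp; omega)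
    have a3 := ih ⟨i.1+1, hlt⟩ j (by simp; omega) (by omega)
    have a4 : i ∈ I := (sg_succ I hlt).mp (by omega)
    have a5 : ee i - ee ⟨i.1+1, hlt⟩ ∈ spn I := by
      rw [← rt_one, ← alphaR_lt hlt]
      exact Submodule.subset_span ⟨i, a4, rfl⟩
    have := add_mem a5 a3
    simpa using this

theorem span_sub {I : Finset (Fin n)} {i j : Fin n} (hs : sg I i = sg I j) :
    ee i - ee j ∈ spn I := by
  rcases le_total i.1 j.1 with h | h
  · exact span_sub_aux I (j.1 - i.1) i j (by omega) hs
  · rw [← neg_sub]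
    exact neg_mem (span_sub_aux I (i.1 - j.1) j i (by omega) hs.symm)

theorem span_ee {I : Finset (Fin n)} (hn : 2 ≤ n) (hI : StandardI n CType.D I) {i : Fin n}
    (hi : sg I i = mval n I) : ee i ∈ spn I := by
  obtain ⟨h1, h2, h3, h4⟩ := std_last hn hI hi
  have a1 : ee i - ee ⟨n-1, by omega⟩ ∈ spn I := span_sub (by rw [hi, h1])
  have a2 : ee i - ee ⟨n-2, by omega⟩ ∈ spn I := span_sub (by rw [hi, h2])
  have a3 : ee ⟨n-2, by omega⟩ + ee ⟨n-1, by omega⟩ ∈ spn I := by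
    rw [← rt_neg, ← alphaR_last (by simp; omega)]
    exact Submodule.subset_span ⟨_, h3, rfl⟩
  have := Submodule.smul_mem _ (1/2 : ℝ) (add_mem (add_mem a1 a2) a3)
  convert this using 1
  module

theorem span_add {I : Finset (Fin n)} (hn : 2 ≤ n) (hI : StandardI n CType.D I) {i j : Fin n}
    (hi : sg I i = mval n I) (hj : sg I j = mval n I) : ee i + ee j ∈ spn I :=
  add_mem (span_ee hn hI hi) (span_ee hn hI hj)

/-- sum of the entries of a segment -/
def fsum (I : Finset (Fin n)) (s : ℕ) (v : V n) : ℝ := ∑ k, if sg I k = s then v k else 0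

theorem fsum_comb (I : Finset (Fin n)) (s : ℕ) (i j : Fin n) (e : ℝ) :
    fsum I s (rt i j e) = (if sg I i = s then 1 else 0) - e * (if sg I j = s then 1 else 0) := by
  have : ∀ k, (if sg I k = s then rt i j e k else 0) =
      (if k = i then (if sg I k = s then 1 else 0) else 0)
        - e * (if k = j then (if sg I k = s then 1 else 0) else 0) := by
    intro k
    simp only [rt, ee, Pi.single_apply, Pi.sub_apply, Pi.smul_apply, smul_eq_mul]
    split_ifs <;> simp
  unfold fsum
  simp only [this, Finset.sum_sub_distrib, ← Finset.mul_sum]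
  simp

theorem fsum_span {I : Finset (Fin n)} (hn : 2 ≤ n) (hI : StandardI n CType.D I) {s : ℕ}
    (hs : s ≠ mval n I) {v : V n} (hv : v ∈ spn I) : fsum I s v = 0 := by
  induction hv using Submodule.span_induction with
  | mem v hv =>
    obtain ⟨i, hi, rfl⟩ := hv
    by_cases h : i.1 + 1 < n
    · rw [alphaR_lt h, fsum_comb, (sg_succ I h).mpr hi]; simp
    · rw [alphaR_last h, fsum_comb]
      have h1 := (sg_last I h).mpr hi
      obtain ⟨_, h2, _⟩ := std_last hn hI h1
      rw [h1, h2]; simp [hs.symm]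
  | zero => simp [fsum]
  | add x y _ _ hx hy =>
    have : fsum I s (x + y) = fsum I s x + fsum I s y := by
      unfold fsum; rw [← Finset.sum_add_distrib]
      apply Finset.sum_congr rfl; intro k _; split_ifs <;> simp
    rw [this, hx, hy, add_zero]
  | smul a x _ hx =>
    have : fsum I s (a • x) = a * fsum I s x := by
      unfold fsum; rw [Finset.mul_sum]
      apply Finset.sum_congr rfl; intro k _; split_ifs <;> simp
    rw [this, hx, mul_zero]

theorem rt_span {I : Finset (Fin n)} (hn : 2 ≤ n) (hI : StandardI n CType.D I) {i j : Fin n}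
    {e : ℝ} (he : e = 1 ∨ e = -1) :
    rt i j e ∈ spn I ↔ (sg I i = sg I j ∧ (e = 1 ∨ sg I i = mval n I)) := by
  constructor
  · intro h
    by_cases hs : sg I i = sg I j
    · refine ⟨hs, ?_⟩
      rcases he with he | he
      · exact Or.inl he
      · right
        by_contra hm
        have := fsum_span hn hI hm h
        rw [fsum_comb, he, hs] at this
        norm_num at this
    · exfalso
      by_cases hm : sg I i = mval n I
      · have hm' : sg I j ≠ mval n I := fun h => hs (hm.trans h.symm)
        have := fsum_span hn hI hm' h
        rw [fsum_comb] at this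
        simp [hs] at this
        rcases he with he | he <;> rw [he] at this <;> norm_num at this
      · have := fsum_span hn hI hm h
        rw [fsum_comb] at this
        simp [Ne.symm hs] at this
  · rintro ⟨h1, h2⟩
    rcases he with he | he
    · rw [he, rt_one]; exact span_sub h1
    · rw [he, rt_neg]
      rcases h2 with h2 | h2
      · rw [he] at h2; norm_num at h2
      · exact span_add hn hI h2 (h1 ▸ h2)

theorem regI_iff {I : Finset (Fin n)} (hn : 2 ≤ n) (hI : StandardI n CType.D I) (x : V n) :
    RegI n CType.D I x ↔ Reg (sg I) (mval n I) x := by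
  constructor
  · intro h i j hij hs
    constructor
    · intro he
      refine h (ee i - ee j) ⟨⟨i, j, hij, by simp⟩, span_sub hs⟩ ?_
      rw [inn_sub']; linarith
    · intro hm he
      refine h (ee i + ee j) ⟨⟨i, j, hij, by simp⟩, span_add hn hI hm (hs ▸ hm)⟩ ?_
      rw [inn_add']; linarith
  · rintro h β ⟨⟨i, j, hij, hb⟩, hsp⟩
    rcases hb with rfl | rfl | rfl
    · have h1 : rt i j (-1) ∈ spn I := by rw [rt_neg]; exact hsp
      rw [rt_span hn hI (by simp)] at h1
      norm_num at h1
      rw [inn_add']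
      intro h0
      exact (h i j hij h1.1).2 h1.2 (by linarith)
    · have h1 : rt i j 1 ∈ spn I := by rw [rt_one]; exact hsp
      rw [rt_span hn hI (by simp)] at h1
      rw [inn_sub']
      intro h0
      exact (h i j hij h1.1).1 (by linarith)
    · have h1 : rt i j (-1) ∈ spn I := by
        rw [rt_neg]
        have := neg_mem hsp
        convert this using 1
        abel
      rw [rt_span hn hI (by simp)] at h1
      norm_num at h1
      have e : JantzenBlocks.inn x (-ee i - ee j) = - (x i + x j) := by
        have := inn_comb x i j (-1) (-1)
        simp only [neg_smul, one_smul, ← sub_eq_add_neg] at this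
        rw [this]; ring
      rw [e]
      intro h0
      exact (h i j hij h1.1).2 h1.2 (by linarith)

theorem plus_dec {I : Finset (Fin n)} {x : V n}
    (hx : ∀ i ∈ I, 0 < JantzenBlocks.inn x (alphaR n CType.D i)) :
    ∀ (d : ℕ) (i j : Fin n), j.1 = i.1 + d → sg I i = sg I j → x j ≤ x i ∧ (0 < d → x j < x i) := by
  intro d
  induction d with
  | zero => intro i j h _; rw [show j = i from Fin.ext (by omega)]; simp
  | succ d ih =>
    intro i j h hs
    have hlt : i.1 + 1 < n := by have := j.2; omega
    have a1 := sg_mono I (i := i) (j := ⟨i.1+1, hlt⟩) (by simp)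
    have a2 := sg_mono I (i := ⟨i.1+1, hlt⟩) (j := j) (by simp; omega)
    have a3 := (ih ⟨i.1+1, hlt⟩ j (by simp; omega) (by omega)).1
    have a4 : i ∈ I := (sg_succ I hlt).mp (by omega)
    have a5 := hx i a4
    rw [alphaR_lt hlt, rt_one, inn_sub'] at a5
    exact ⟨by linarith, fun _ => by linarith⟩

theorem plus_reg {I : Finset (Fin n)} (hn : 2 ≤ n) (hI : StandardI n CType.D I) {x : V n}
    (hx : ∀ i ∈ I, 0 < JantzenBlocks.inn x (alphaR n CType.D i)) : Reg (sg I) (mval n I) x := by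
  have key : ∀ i j : Fin n, i.1 < j.1 → sg I i = sg I j →
      x j < x i ∧ (sg I i = mval n I → 0 < x i + x j) := by
    intro i j hij hs
    refine ⟨(plus_dec hx (j.1 - i.1) i j (by omega) hs).2 (by omega), fun hm => ?_⟩
    obtain ⟨h1, h2, h3, h4⟩ := std_last hn hI hm
    have a1 := (plus_dec hx (n - 2 - i.1) i ⟨n-2, by omega⟩
      (by simp; have := j.2; omega) (by rw [hm, h2])).1
    have a2 := (plus_dec hx (n - 1 - j.1) j ⟨n-1, by omega⟩
      (by simp; have := j.2; omega) (by rw [← hs, hm, h1])).1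
    have a3 := hx _ h3
    rw [alphaR_last (by simp; omega), rt_neg, inn_add'] at a3
    linarith
  intro i j hij hs
  rcases lt_or_gt_of_ne (fun h => hij (Fin.ext h) : i.1 ≠ j.1) with h | h
  · have := key i j h hs
    exact ⟨fun e => by linarith, fun hm e => by have := this.2 hm; linarith⟩
  · have := key j i h hs.symm
    exact ⟨fun e => by linarith, fun hm e => by have := this.2 (hs ▸ hm); linarith⟩

end Out3

section Out4

variable {n : ℕ}

abbrev Orb (I : Finset (Fin n)) : V n → V n → Prop := WIOrb n CType.D I

theorem orb_trans {I : Finset (Fin n)} {x y z : V n} (h1 : Orb I x y) (h2 : Orb I y z) : Orb I x z :=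
  Relation.ReflTransGen.trans h1 h2

theorem orb_perm_aux (I : Finset (Fin n)) : ∀ (d : ℕ) (i j : Fin n), j.1 = i.1 + d + 1 →
    sg I i = sg I j → ∀ x, Orb I x (op i j 1 x) := by
  intro d
  induction d with
  | zero =>
    intro i j h hs x
    have hlt : i.1 + 1 < n := by have := j.2; omega
    have hj : j = ⟨i.1+1, hlt⟩ := Fin.ext (by simp only; omega)
    subst hj
    refine Relation.ReflTransGen.single ⟨i, (sg_succ I hlt).mp hs.symm, ?_⟩
    rw [alphaR_lt hlt, sRefl_rt x (by intro h; have := congrArg Fin.val h; simp at this) (by simp)]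
  | succ d ih =>
    intro i j h hs x
    have hlt : j.1 - 1 < n := by have := j.2; omega
    have a1 := sg_mono I (i := i) (j := ⟨j.1-1, hlt⟩) (by simp; omega)
    have a2 := sg_mono I (i := ⟨j.1-1, hlt⟩) (j := j) (by simp)
    have b1 := ih i ⟨j.1-1, hlt⟩ (by simp; omega) (by omega)
    have b2 : ∀ x, Orb I x (op ⟨j.1-1, hlt⟩ j 1 x) := by
      intro x
      have hj2 : j = ⟨(⟨j.1-1, hlt⟩ : Fin n).1 + 1, by simp; have := j.2; omega⟩ :=
        Fin.ext (by simp; omega)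
      refine Relation.ReflTransGen.single ⟨⟨j.1-1, hlt⟩, ?_, ?_⟩
      · refine (sg_succ I (by simp; have := j.2; omega)).mp ?_
        rw [← hj2]; omega
      · rw [alphaR_lt (by simp; have := j.2; omega), ← hj2, sRefl_rt x (by
          intro h; have := congrArg Fin.val h; simp at this; omega) (by simp)]
    have := orb_trans (orb_trans (b2 x) (b1 _)) (b2 _)
    rwa [op_conj] at this
    · intro h; have := congrArg Fin.val h; simp at this; omega
    · intro h; have := congrArg Fin.val h; omega
    · intro h; have := congrArg Fin.val h; simp at this; omega

theorem orb_perm {I : Finset (Fin n)} {i j : Fin n} (hij : i ≠ j) (hs : sg I i = sg I j) (x : V n) :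
    Orb I x (op i j 1 x) := by
  rcases lt_or_gt_of_ne (fun h => hij (Fin.ext h) : i.1 ≠ j.1) with h | h
  · exact orb_perm_aux I (j.1 - i.1 - 1) i j (by omega) hs x
  · rw [op_symm]; exact orb_perm_aux I (i.1 - j.1 - 1) j i (by omega) hs.symm x

theorem orb_neg {I : Finset (Fin n)} (hn : 2 ≤ n) (hI : StandardI n CType.D I) {i j : Fin n}
    (hij : i ≠ j) (hi : sg I i = mval n I) (hj : sg I j = mval n I) (x : V n) :
    Orb I x (op i j (-1) x) := by
  obtain ⟨h1, h2, h3, h4⟩ := std_last hn hI hi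
  set a : Fin n := ⟨n-1, by omega⟩
  set b : Fin n := ⟨n-2, by omega⟩
  have hba : b ≠ a := by intro h; have := congrArg Fin.val h; simp [a, b] at this; omega
  have c0 : ∀ x, Orb I x (op b a (-1) x) := by
    intro x
    refine Relation.ReflTransGen.single ⟨a, h3, ?_⟩
    rw [alphaR_last (by simp [a]; omega), sRefl_rt x hba (by simp)]
  have c0' : ∀ x, Orb I x (op a b (-1) x) := by
    intro x
    rw [op_symm]; exact c0 x
  have c1 : ∀ k, k ≠ a → sg I k = mval n I → ∀ x, Orb I x (op k a (-1) x) := by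
    intro k hk hkm x
    by_cases hkb : k = b
    · rw [hkb]; exact c0 x
    · have := orb_trans (orb_trans (orb_perm (Ne.symm hkb) (h2.trans hkm.symm) x) (c0' _)) (orb_perm (Ne.symm hkb) (h2.trans hkm.symm) _)
      rw [op_conj hba.symm (Ne.symm hk) (Ne.symm hkb), op_symm] at this
      exact this
  by_cases ha : j = a
  · rw [ha] at hij ⊢; exact c1 i hij hi x
  · by_cases hb : i = a
    · rw [hb, op_symm]; exact c1 j ha hj x
    · have := orb_trans (orb_trans (orb_perm (Ne.symm ha) (h1.trans hj.symm) x) (c1 i hb hi _))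
        (orb_perm (Ne.symm ha) (h1.trans hj.symm) _)
      rwa [op_conj hb hij (Ne.symm ha)] at this

theorem reg_perm {seg : Fin n → ℕ} {m : ℕ} {x : V n} {i j : Fin n} (hs : seg i = seg j)
    (h : Reg seg m x) : Reg seg m (op i j 1 x) := by
  by_cases hij : i = j
  · subst hij
    have : op i i 1 x = x := by funext k; unfold op; split_ifs with h <;> simp [h]
    rw [this]; exact h
  have e : op i j 1 x = fun k => x (Equiv.swap i j k) := by
    funext k
    by_cases h1 : k = i
    · subst h1; rw [op_p, Equiv.swap_apply_left, one_mul]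
    · by_cases h2 : k = j
      · subst h2; rw [op_q hij, Equiv.swap_apply_right, one_mul]
      · rw [op_o h1 h2, Equiv.swap_apply_of_ne_of_ne h1 h2]
  have e2 : ∀ k, seg (Equiv.swap i j k) = seg k := by
    intro k
    by_cases h1 : k = i
    · subst h1; rw [Equiv.swap_apply_left, hs]
    · by_cases h2 : k = j
      · subst h2; rw [Equiv.swap_apply_right, hs]
      · rw [Equiv.swap_apply_of_ne_of_ne h1 h2]
  intro a b hab hsab
  rw [e]
  have := h (Equiv.swap i j a) (Equiv.swap i j b) (fun h => hab ((Equiv.swap i j).injective h))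
    (by rw [e2, e2, hsab])
  rwa [e2] at this

theorem rt_inj {p q i k : Fin n} {e e' : ℝ} (he : e = 1 ∨ e = -1) (he' : e' = 1 ∨ e' = -1)
    (hpq : p ≠ q) (hik : i ≠ k) (h : rt p q e = rt i k e') :
    e = e' ∧ ((p = i ∧ q = k) ∨ (p = k ∧ q = i)) := by
  have h1 := congrFun h i
  have h2 := congrFun h k
  simp only [rt, ee, Pi.single_apply, Pi.sub_apply, Pi.smul_apply, smul_eq_mul] at h1 h2
  by_cases a1 : i = p
  · subst a1
    by_cases a4 : k = q
    · subst a4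
      simp [hik, hik.symm] at h2
      exact ⟨h2, Or.inl ⟨rfl, rfl⟩⟩
    · exfalso
      simp [a4, hik.symm] at h2
      rcases he' with he' | he' <;> rw [he'] at h2 <;> norm_num at h2
  · by_cases a2 : i = q
    · subst a2
      by_cases a3 : k = p
      · subst a3
        simp [hik, hik.symm] at h1 h2
        exact ⟨by linarith, Or.inr ⟨rfl, rfl⟩⟩
      · exfalso
        simp [a3, hik.symm] at h2
        rcases he' with he' | he' <;> rw [he'] at h2 <;> norm_num at h2
    · exfalso
      simp [a1, a2, hik] at h1

end Out4

section Out5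

variable {n : ℕ}

def Exc' (I : Finset (Fin n)) (x : V n) (p q : Fin n) : Prop :=
  (sg I p = sg I q ∧ occ (sg I) x (mval n I) 0 ∧
    ((x q = 0 ∧ occ (sg I) x (mval n I) |x p|) ∨ (x p = 0 ∧ occ (sg I) x (mval n I) |x q|))) ∨
  (sg I p ≠ sg I q ∧ (sg I p = mval n I ∨ sg I q = mval n I) ∧ |x p| = |x q| ∧
    occ (sg I) x (sg I p) 0 ∧ occ (sg I) x (sg I q) 0)

theorem Exc'.symm {I : Finset (Fin n)} {x : V n} {p q : Fin n} (h : Exc' I x p q) : Exc' I x q p := by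
  rcases h with ⟨h1, h2, h3⟩ | ⟨h1, h2, h3, h4, h5⟩
  · exact Or.inl ⟨h1.symm, h2, h3.symm⟩
  · exact Or.inr ⟨Ne.symm h1, h2.symm, h3.symm, h5, h4⟩

theorem exc_of {I : Finset (Fin n)} (hI : StandardI n CType.D I) {x : V n} {p q : Fin n} {e : ℝ}
    (he : e = 1 ∨ e = -1) (hpq : p ≠ q) (h : ExcD n I x (rt p q e)) : Exc' I x p q := by
  obtain ⟨s, hs1, hs2, a, ha, -, -, -, -, i, j, k, l, hi, hj, hk, hl, xj, xl, hh⟩ := h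
  have hm1 : 1 ≤ mval n I := by omega
  rw [inSeg_std hI s hs1 hs2.le] at hi hj
  rw [inSeg_std hI _ hm1 le_rfl] at hk hl
  have main : |x i| = a ∧ |x k| = a ∧
      (rt p q e = ee i + ee j ∨ rt p q e = ee i + ee k ∨ rt p q e = ee i - ee k) := by
    rcases hh with ⟨h1, h2⟩ | ⟨h1, h2⟩
    · rcases h1 with ⟨u, v⟩ | ⟨u, v⟩ <;> rw [u, v] <;> simp [abs_of_pos ha] <;> tauto
    · rcases h1 with ⟨u, v⟩ | ⟨u, v⟩ <;> rw [u, v] <;> simp [abs_of_pos ha] <;> tauto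
  obtain ⟨ai, ak, hr⟩ := main
  have hij : i ≠ j := by rintro rfl; rw [xj] at ai; simp at ai; linarith
  have hik : i ≠ k := by rintro rfl; omega
  have z1 : occ (sg I) x (mval n I) 0 := ⟨l, hl, by rw [xl, abs_zero]⟩
  have z2 : occ (sg I) x s 0 := ⟨j, hj, by rw [xj, abs_zero]⟩
  have A : Exc' I x i j := Or.inl ⟨hi.trans hj.symm, z1, Or.inl ⟨xj, ⟨k, hk, ak.trans ai.symm⟩⟩⟩
  have B : Exc' I x i k := Or.inr ⟨by omega, Or.inr hk, ai.trans ak.symm, by rw [hi]; exact z2,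
    by rw [hk]; exact z1⟩
  rcases hr with hr | hr | hr
  · rw [← rt_neg] at hr
    rcases (rt_inj he (by simp) hpq hij hr).2 with ⟨rfl, rfl⟩ | ⟨rfl, rfl⟩
    · exact A
    · exact A.symm
  · rw [← rt_neg] at hr
    rcases (rt_inj he (by simp) hpq hik hr).2 with ⟨rfl, rfl⟩ | ⟨rfl, rfl⟩
    · exact B
    · exact B.symm
  · rw [← rt_one] at hr
    rcases (rt_inj he (by simp) hpq hik hr).2 with ⟨rfl, rfl⟩ | ⟨rfl, rfl⟩
    · exact B
    · exact B.symm

theorem rt_pos {i j : Fin n} (hij : i < j) {e : ℝ} (he : e = 1 ∨ e = -1) :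
    rt i j e ∈ PhiPos n CType.D := by
  refine ⟨⟨i, j, hij.ne, ?_⟩, i, ?_, ?_⟩
  · rcases he with rfl | rfl
    · rw [rt_one]; simp
    · rw [rt_neg]; simp
  · simp [rt, ee, hij.ne]
  · intro k hk
    simp [rt, ee, hk.ne, (hk.trans hij).ne]

theorem conn_of_orb {I : Finset (Fin n)} (hn : 2 ≤ n) (hI : StandardI n CType.D I) {x y : V n}
    (hx : Reg (sg I) (mval n I) x) (hy : Reg (sg I) (mval n I) y) (h : Orb I x y) :
    Conn n CType.D I x y := by
  rw [← regI_iff hn hI] at hx hy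
  exact ⟨hx, hy, Relation.ReflTransGen.single ⟨hx, hy, Or.inl h⟩⟩

theorem conn_trans {I : Finset (Fin n)} {x y z : V n} (h1 : Conn n CType.D I x y)
    (h2 : Conn n CType.D I y z) : Conn n CType.D I x z :=
  ⟨h1.1, h2.2.1, h1.2.2.trans h2.2.2⟩

theorem link_aux {I : Finset (Fin n)} (hn : 2 ≤ n) (hI : StandardI n CType.D I) {x : V n}
    {i j : Fin n} {e : ℝ} (he : e = 1 ∨ e = -1) (hij : i < j)
    (hsp : ¬ (sg I i = sg I j ∧ (e = 1 ∨ sg I i = mval n I)))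
    (hx : Reg (sg I) (mval n I) x) (hy : Reg (sg I) (mval n I) (op i j e x))
    (hne : op i j e x ≠ x) (hexc : ¬ Exc' I x i j) : Conn n CType.D I x (op i j e x) := by
  rw [← regI_iff hn hI] at hx hy
  have hr := sRefl_rt x hij.ne he
  refine ⟨hx, hy, Relation.ReflTransGen.single ⟨hx, hy, Or.inr ⟨rt i j e, ?_, ?_⟩⟩⟩
  · unfold LinkedRoot
    rw [if_pos hI]
    refine ⟨hx, rt_pos hij he, ?_, by rw [hr]; exact hy, by rw [hr]; exact hne, ?_⟩
    · rintro ⟨_, h⟩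
      exact hsp ((rt_span hn hI he).mp h)
    · intro h; exact hexc (exc_of hI he hij.ne h)
  · rw [hr]; exact Relation.ReflTransGen.refl

theorem link {I : Finset (Fin n)} (hn : 2 ≤ n) (hI : StandardI n CType.D I) {x : V n}
    {i j : Fin n} {e : ℝ} (he : e = 1 ∨ e = -1) (hij : i ≠ j)
    (hsp : ¬ (sg I i = sg I j ∧ (e = 1 ∨ sg I i = mval n I)))
    (hx : Reg (sg I) (mval n I) x) (hy : Reg (sg I) (mval n I) (op i j e x))
    (hne : op i j e x ≠ x) (hexc : ¬ Exc' I x i j) : Conn n CType.D I x (op i j e x) := by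
  rcases lt_or_gt_of_ne hij with h | h
  · exact link_aux hn hI he h hsp hx hy hne hexc
  · rw [op_symm] at hy hne ⊢
    refine link_aux hn hI he h ?_ hx hy hne (fun h => hexc h.symm)
    rintro ⟨h1, h2⟩; exact hsp ⟨h1.symm, h1 ▸ h2⟩

theorem ff_op {x : V n} {i j : Fin n} (hij : i ≠ j) (h : |x i| = |x j|) :
    ∃ e : ℝ, (e = 1 ∨ e = -1) ∧ op i j e x = flip i (flip j x) := by
  rcases abs_eq_abs.mp h with h | h
  · refine ⟨-1, by simp, ?_⟩
    funext k; unfold op flip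
    by_cases h1 : k = i
    · subst h1; simp [hij, h]
    · by_cases h2 : k = j
      · subst h2; simp [h1, h]
      · simp [h1, h2]
  · refine ⟨1, by simp, ?_⟩
    funext k; unfold op flip
    by_cases h1 : k = i
    · subst h1; simp [hij, h]
    · by_cases h2 : k = j
      · subst h2; simp [h1, h]
      · simp [h1, h2]

theorem ff_ne {x : V n} {i j : Fin n} (hij : i ≠ j) (h : x i ≠ 0) : flip i (flip j x) ≠ x := by
  intro he
  have := congrFun he i
  simp [flip, hij] at this
  exact h (by linarith)

theorem ff_ff (i j : Fin n) (x : V n) : flip i (flip j (flip i (flip j x))) = x := by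
  rw [flip_comm j i, flip_flip, flip_flip]

theorem Exc'_ff {I : Finset (Fin n)} {x : V n} {p q : Fin n} :
    Exc' I (flip p (flip q x)) p q ↔ Exc' I x p q := by
  have z : ∀ k, flip p (flip q x) k = 0 ↔ x k = 0 := by
    intro k; rw [← abs_eq_zero, abs_flip, abs_flip, abs_eq_zero]
  unfold Exc'
  simp only [occ_flip, abs_flip, z]

/-- move flipping a pair of equal absolute values in two segments -/
theorem mv_fl {I : Finset (Fin n)} (hn : 2 ≤ n) (hI : StandardI n CType.D I) {x : V n}
    {i j : Fin n} (hs : sg I i ≠ sg I j) (ha : |x i| = |x j|) (h0 : x i ≠ 0)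
    (hx : Reg (sg I) (mval n I) x) (hy : Reg (sg I) (mval n I) (flip i (flip j x)))
    (hexc : ¬ Exc' I x i j) : Conn n CType.D I x (flip i (flip j x)) := by
  have hij : i ≠ j := fun h => hs (by rw [h])
  obtain ⟨e, he, h⟩ := ff_op hij ha
  rw [← h] at hy ⊢
  exact link hn hI he hij (fun h => hs h.1) hx hy (by rw [h]; exact ff_ne hij h0) hexc

theorem mv_inn {I : Finset (Fin n)} (hn : 2 ≤ n) (hI : StandardI n CType.D I) {x : V n}
    {i j : Fin n} (hs : sg I i = sg I j) (hm : sg I i ≠ mval n I) (ha : |x i| ≠ |x j|)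
    (hx : Reg (sg I) (mval n I) x) (hy : Reg (sg I) (mval n I) (flip i (flip j x)))
    (hexc : ¬ Exc' I x i j) : Conn n CType.D I x (flip i (flip j x)) := by
  have hij : i ≠ j := fun h => ha (by rw [h])
  have h1 := op_op_neg hij x
  have h2 : op i j (-1) x = op i j 1 (flip i (flip j x)) := by
    rw [← h1, op_op hij (by simp)]
  have h3 : Reg (sg I) (mval n I) (op i j (-1) x) := by
    rw [h2]; exact reg_perm hs hy
  refine conn_trans (link hn hI (by simp) hij ?_ hx h3 ?_ hexc) ?_
  · rintro ⟨_, h | h⟩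
    · norm_num at h
    · exact hm h
  · intro h
    have := congrFun h i
    rw [op_p] at this
    apply ha
    rw [← this]; simp
  · have := orb_perm hij hs (op i j (-1) x)
    rw [h1] at this
    exact conn_of_orb hn hI h3 hy this

theorem moves {I : Finset (Fin n)} (hn : 2 ≤ n) (hI : StandardI n CType.D I) :
    Moves (sg I) (mval n I) (fun x y => Conn n CType.D I x y ∧ Conn n CType.D I y x) where
  symm := fun x y h => ⟨h.2, h.1⟩
  trans := fun x y z h h' => ⟨conn_trans h.1 h'.1, conn_trans h'.2 h.2⟩
  ex := by
    have key : ∀ x : V n, ∀ i j e, (e = 1 ∨ e = -1) → sg I i ≠ sg I j → |x i| ≠ |x j| →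
        Reg (sg I) (mval n I) x → Reg (sg I) (mval n I) (op i j e x) →
        Conn n CType.D I x (op i j e x) := by
      intro x i j e he hs ha hx hy
      refine link hn hI he (fun h => hs (by rw [h])) (fun h => hs h.1) hx hy ?_ ?_
      · intro h
        have := congrFun h i
        rw [op_p] at this
        apply ha
        rw [← this]
        rcases he with rfl | rfl <;> simp
      · rintro (h | h)
        · exact hs h.1
        · exact ha h.2.2.1
    intro x i j e he hs ha hx hy
    have hij : i ≠ j := fun h => hs (by rw [h])
    refine ⟨key x i j e he hs ha hx hy, ?_⟩
    have := key (op i j e x) i j e he hs (by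
      rw [op_p, op_q hij]
      rcases he with rfl | rfl <;> simpa using Ne.symm ha) hy (by rw [op_op hij he]; exact hx)
    rwa [op_op hij he] at this
  perm := by
    intro x i j hs hij hx
    have hy := reg_perm hs hx
    refine ⟨conn_of_orb hn hI hx hy (orb_perm hij hs x), conn_of_orb hn hI hy hx ?_⟩
    have := orb_perm hij hs (op i j 1 x)
    rwa [op_op hij (by simp)] at this
  fl := by
    intro x i j hs hi hj ha h0 hx hy
    have hexc : ¬ Exc' I x i j := by
      rintro (h | h)
      · exact hs h.1
      · rcases h.2.1 with h | h
        · exact hi h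
        · exact hj h
    refine ⟨mv_fl hn hI hs ha h0 hx hy hexc, ?_⟩
    have := mv_fl hn hI (x := flip i (flip j x)) hs (by simpa only [abs_flip] using ha)
      (by rw [← abs_ne_zero, abs_flip, abs_flip, abs_ne_zero]; exact h0) hy (by rwa [ff_ff])
      (by rwa [Exc'_ff])
    rwa [ff_ff] at this
  flm := by
    intro x i j hi hj ha h0 hocc hx hy
    have hs : sg I i ≠ sg I j := by rw [hj]; exact hi
    have hexc : ¬ Exc' I x i j := by
      rintro (h | h)
      · exact hs h.1
      · exact hocc ⟨h.2.2.2.1, hj ▸ h.2.2.2.2⟩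
    refine ⟨mv_fl hn hI hs ha h0 hx hy hexc, ?_⟩
    have := mv_fl hn hI (x := flip i (flip j x)) hs (by simpa only [abs_flip] using ha)
      (by rw [← abs_ne_zero, abs_flip, abs_flip, abs_ne_zero]; exact h0) hy (by rwa [ff_ff])
      (by rwa [Exc'_ff])
    rwa [ff_ff] at this
  inn := by
    intro x i j hs hm hij ha h0 h0' hx hy
    have hexc : ¬ Exc' I x i j := by
      rintro (h | h)
      · rcases h.2.2 with h | h
        · exact h0' h.1
        · exact h0 h.1
      · exact h.1 hs
    refine ⟨mv_inn hn hI hs hm ha hx hy hexc, ?_⟩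
    have := mv_inn hn hI (x := flip i (flip j x)) hs hm (by simpa only [abs_flip] using ha)
      hy (by rwa [ff_ff]) (by rwa [Exc'_ff])
    rwa [ff_ff] at this
  in0 := by
    intro x i j hs hm h0 h0' hocc hx hy
    have hexc : ¬ Exc' I x i j := by
      rintro (h | h)
      · rcases h.2.2 with h' | h'
        · exact hocc ⟨h.2.1, h'.2⟩
        · exact h0 h'.1
      · exact h.1 hs
    have e : flip i (flip j x) = flip i x := by rw [flip_zero j x h0']
    have ha : |x i| ≠ |x j| := by rw [h0', abs_zero]; exact abs_ne_zero.mpr h0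
    rw [← e] at hy ⊢
    refine ⟨mv_inn hn hI hs hm ha hx hy hexc, ?_⟩
    have := mv_inn hn hI (x := flip i (flip j x)) hs hm (by simpa only [abs_flip] using ha)
      hy (by rwa [ff_ff]) (by rwa [Exc'_ff])
    rwa [ff_ff] at this
  mm := by
    intro x i j hi hj hij hx
    have key : ∀ x, Orb I x (flip i (flip j x)) := by
      intro x
      have := orb_trans (orb_neg hn hI hij hi hj x) (orb_perm hij (hi.trans hj.symm) _)
      rwa [op_op_neg hij] at this
    have h1 := hx.flip (single_m hx hj)
    have hy := h1.flip (single_m h1 hi)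
    refine ⟨conn_of_orb hn hI hx hy (key x), conn_of_orb hn hI hy hx ?_⟩
    have := key (flip i (flip j x))
    rwa [ff_ff] at this

end Out5

section Out6

variable {n : ℕ}

theorem phiW_phiW (x : V n) : phiW (phiW x) = x := by
  funext k; unfold phiW; split_ifs <;> simp

theorem abs_phiW (x : V n) (k : Fin n) : |phiW x k| = |x k| := by
  unfold phiW; split_ifs <;> simp

theorem phiW_flip (x : V n) (i : Fin n) : phiW (flip i x) = flip i (phiW x) := by
  funext k; unfold phiW flip
  by_cases h2 : k = i
  · subst h2; by_cases h1 : k.1 = n - 1 <;> simp [h1]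
  · simp [h2]

theorem phiW_add (x y : V n) : phiW (x + y) = phiW x + phiW y := by
  funext k; simp only [phiW, Pi.add_apply]; split_ifs <;> ring

theorem phiW_smul (a : ℝ) (x : V n) : phiW (a • x) = a • phiW x := by
  funext k; simp only [phiW, Pi.smul_apply, smul_eq_mul]; split_ifs <;> ring

theorem phiW_sub (x y : V n) : phiW (x - y) = phiW x - phiW y := by
  funext k; simp only [phiW, Pi.sub_apply]; split_ifs <;> ring

theorem inn_phiW (x y : V n) : JantzenBlocks.inn (phiW x) (phiW y) = JantzenBlocks.inn x y := by
  unfold JantzenBlocks.inn phiW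
  apply Finset.sum_congr rfl
  intro k _; split_ifs <;> ring

theorem inn_phiW' (x y : V n) : JantzenBlocks.inn (phiW x) y = JantzenBlocks.inn x (phiW y) := by
  rw [← inn_phiW x, phiW_phiW]

theorem sRefl_phiW (b x : V n) : sRefl (phiW b) (phiW x) = phiW (sRefl b x) := by
  unfold sRefl
  rw [inn_phiW, inn_phiW, phiW_sub, phiW_smul]

theorem phiW_rt {i j : Fin n} (hi : i.1 ≠ n - 1) (hj : j.1 ≠ n - 1) (e : ℝ) :
    phiW (rt i j e) = rt i j e := by
  funext k
  unfold phiW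
  split_ifs with h
  · have h1 : k ≠ i := fun h' => hi (h' ▸ h)
    have h2 : k ≠ j := fun h' => hj (h' ▸ h)
    simp [rt, ee, h1, h2]
  · rfl

theorem phiW_rt_last {i j : Fin n} (hi : i.1 ≠ n - 1) (hj : j.1 = n - 1) (e : ℝ) :
    phiW (rt i j e) = rt i j (-e) := by
  funext k
  unfold phiW
  split_ifs with h
  · have h1 : k ≠ i := fun h' => hi (h' ▸ h)
    have h2 : k = j := Fin.ext (by omega)
    subst h2
    simp [rt, ee, h1]
  · have h2 : k ≠ j := fun h' => h (h' ▸ hj)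
    simp [rt, ee, h2]

theorem alpha_swap (hn : 2 ≤ n) (i : Fin n) :
    alphaR n CType.D (swapLast n i) = phiW (alphaR n CType.D i) := by
  have hi2 := i.2
  by_cases h1 : i.1 = n - 1
  · have e : swapLast n i = ⟨n - 2, by omega⟩ := by unfold swapLast; rw [if_pos h1]
    rw [e, alphaR_lt (by simp; omega), alphaR_last (by omega), phiW_rt_last (by simp; omega) h1]
    rw [neg_neg]
    congr 1
    apply Fin.ext; simp; omega
  · by_cases h2 : i.1 = n - 2
    · have e : swapLast n i = ⟨n - 1, by omega⟩ := by
        unfold swapLast; rw [if_neg h1, if_pos h2]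
      rw [e, alphaR_last (by simp; omega), alphaR_lt (by omega), phiW_rt_last h1 (by simp; omega)]
      congr 1 <;> apply Fin.ext <;> simp <;> omega
    · have e : swapLast n i = i := by unfold swapLast; rw [if_neg h1, if_neg h2]
      rw [e, alphaR_lt (by omega), phiW_rt h1 (by simp; omega)]

theorem span_phi (hn : 2 ≤ n) {I : Finset (Fin n)} {v : V n} (hv : v ∈ spn (phiIdx n I)) :
    phiW v ∈ spn I := by
  induction hv using Submodule.span_induction with
  | mem v hv =>
    obtain ⟨i, hi, rfl⟩ := hv
    rw [← alpha_swap hn]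
    exact Submodule.subset_span ⟨_, (mem_phiIdx hn I i).mp hi, rfl⟩
  | zero =>
    have : phiW (0 : V n) = 0 := by funext k; simp [phiW]
    rw [this]; exact zero_mem _
  | add x y _ _ hx hy => rw [phiW_add]; exact add_mem hx hy
  | smul a x _ hx => rw [phiW_smul]; exact Submodule.smul_mem _ _ hx

theorem roots_phi {v : V n} (hv : v ∈ DRoots n) : phiW v ∈ DRoots n := by
  obtain ⟨i, j, hij, hv⟩ := hv
  have e1 : ∀ k : Fin n, k.1 ≠ n - 1 → phiW (ee k) = ee k := by
    intro k hk; funext l; unfold phiW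
    split_ifs with h
    · have : l ≠ k := fun h' => hk (h' ▸ h)
      simp [ee, this]
    · rfl
  have e2 : ∀ k : Fin n, k.1 = n - 1 → phiW (ee k) = - ee k := by
    intro k hk; funext l; unfold phiW
    split_ifs with h
    · rfl
    · have : l ≠ k := fun h' => h (h' ▸ hk)
      simp [ee, this]
  have e3 : phiW (- ee i - ee j) = - phiW (ee i) - phiW (ee j) := by
    rw [phiW_sub]
    congr 1
    have := phiW_smul (-1) (ee i)
    simpa using this
  by_cases hi : i.1 = n - 1
  · have hj : j.1 ≠ n - 1 := fun h => hij (Fin.ext (by omega))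
    rcases hv with rfl | rfl | rfl
    · rw [phiW_add, e2 i hi, e1 j hj]
      exact ⟨j, i, hij.symm, Or.inr (Or.inl (by abel))⟩
    · rw [phiW_sub, e2 i hi, e1 j hj]
      exact ⟨i, j, hij, Or.inr (Or.inr rfl)⟩
    · rw [e3, e2 i hi, e1 j hj]
      exact ⟨i, j, hij, Or.inr (Or.inl (by abel))⟩
  · by_cases hj : j.1 = n - 1
    · rcases hv with rfl | rfl | rfl
      · rw [phiW_add, e2 j hj, e1 i hi]
        exact ⟨i, j, hij, Or.inr (Or.inl (by abel))⟩
      · rw [phiW_sub, e2 j hj, e1 i hi]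
        exact ⟨i, j, hij, Or.inl (by abel)⟩
      · rw [e3, e2 j hj, e1 i hi]
        exact ⟨j, i, hij.symm, Or.inr (Or.inl (by abel))⟩
    · refine ⟨i, j, hij, ?_⟩
      rcases hv with rfl | rfl | rfl
      · rw [phiW_add, e1 j hj, e1 i hi]; simp
      · rw [phiW_sub, e1 j hj, e1 i hi]; simp
      · rw [e3, e1 j hj, e1 i hi]; simp

theorem regI_phi (hn : 2 ≤ n) {I : Finset (Fin n)} {x : V n} (h : RegI n CType.D I x) :
    RegI n CType.D (phiIdx n I) (phiW x) := by
  rintro β ⟨h1, h2⟩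
  rw [inn_phiW']
  exact h _ ⟨roots_phi h1, span_phi hn h2⟩

theorem orb_phi (hn : 2 ≤ n) {I : Finset (Fin n)} {x y : V n} (h : Orb I x y) :
    Orb (phiIdx n I) (phiW x) (phiW y) := by
  induction h with
  | refl => exact Relation.ReflTransGen.refl
  | tail _ h ih =>
    obtain ⟨i, hi, rfl⟩ := h
    refine Relation.ReflTransGen.tail ih ⟨swapLast n i, ?_, ?_⟩
    · rw [mem_phiIdx hn, swapLast_invol hn]; exact hi
    · rw [alpha_swap hn, sRefl_phiW]

theorem conn_phi (hn : 2 ≤ n) {I : Finset (Fin n)} (hI : ¬ StandardI n CType.D I) {x y : V n}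
    (h : Conn n CType.D (phiIdx n I) x y) : Conn n CType.D I (phiW x) (phiW y) := by
  have hr : ∀ {z}, RegI n CType.D (phiIdx n I) z → RegI n CType.D I (phiW z) := by
    intro z hz
    have := regI_phi hn hz
    rwa [phiIdx_invol hn] at this
  have ho : ∀ {z w}, Orb (phiIdx n I) z w → Orb I (phiW z) (phiW w) := by
    intro z w hz
    have := orb_phi hn hz
    rwa [phiIdx_invol hn] at this
  obtain ⟨h1, h2, h3⟩ := h
  refine ⟨hr h1, hr h2, ?_⟩
  clear h1 h2
  induction h3 with
  | refl => exact Relation.ReflTransGen.refl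
  | tail _ h ih =>
    refine Relation.ReflTransGen.tail ih ?_
    obtain ⟨a1, a2, a3⟩ := h
    refine ⟨hr a1, hr a2, ?_⟩
    rcases a3 with a3 | ⟨β, b1, b2⟩
    · exact Or.inl (ho a3)
    · right
      refine ⟨phiW β, ?_, ?_⟩
      · unfold LinkedRoot at b1 ⊢
        rw [if_neg hI, phiW_phiW, phiW_phiW]
        rwa [if_pos (std_phiIdx hI)] at b1
      · rw [sRefl_phiW]; exact ho b2

theorem model (hn : 2 ≤ n) (I : Finset (Fin n)) : ∃ (I0 : Finset (Fin n)) (ψ : V n → V n),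
    StandardI n CType.D I0 ∧ mval n I0 = mval n I ∧
    (∀ s, 1 ≤ s → s ≤ mval n I → ∀ i, InSeg n CType.D I s i ↔ sg I0 i = s) ∧
    (∀ x i, |ψ x i| = |x i|) ∧
    (∀ x, RegI n CType.D I x → Reg (sg I0) (mval n I0) (ψ x)) ∧
    (∀ x, LamIPlus n CType.D I x → Reg (sg I0) (mval n I0) (ψ x)) ∧
    (∀ x i, ψ (flip i x) = flip i (ψ x)) ∧
    (∀ x y, Conn n CType.D I0 (ψ x) (ψ y) → Conn n CType.D I x y) := by
  by_cases hI : StandardI n CType.D I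
  · refine ⟨I, id, hI, rfl, fun s h1 h2 i => inSeg_std hI s h1 h2 i, fun _ _ => rfl,
      fun x h => (regI_iff hn hI x).mp h, fun x h => plus_reg hn hI h.2, fun _ _ => rfl,
      fun _ _ h => h⟩
  · have hI' := std_phiIdx hI
    refine ⟨phiIdx n I, phiW, hI', mval_phiIdx hn I, fun s h1 h2 i => inSeg_nonstd hI s h1 h2 i,
      abs_phiW, fun x h => (regI_iff hn hI' _).mp (regI_phi hn h), fun x h => ?_,
      phiW_flip, fun x y h => ?_⟩
    · apply plus_reg hn hI'
      intro i hi
      rw [inn_phiW', ← alpha_swap hn]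
      exact h.2 _ ((mem_phiIdx hn I i).mp hi)
    · have := conn_phi hn hI h
      rwa [phiW_phiW, phiW_phiW] at this

end Out6

section Out7

variable {n : ℕ}

def AbsPerm (x y : V n) : Prop := ∃ σ : Equiv.Perm (Fin n), ∀ k, |y k| = |x (σ k)|

theorem AbsPerm.symm {x y : V n} (h : AbsPerm x y) : AbsPerm y x := by
  obtain ⟨σ, h⟩ := h
  exact ⟨σ.symm, fun k => by rw [h]; simp⟩

theorem AbsPerm.trans {x y z : V n} (h : AbsPerm x y) (h' : AbsPerm y z) : AbsPerm x z := by
  obtain ⟨σ, h⟩ := h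
  obtain ⟨τ, h'⟩ := h'
  exact ⟨τ.trans σ, fun k => by rw [h', h]; simp⟩

theorem absPerm_op {i j : Fin n} (hij : i ≠ j) {e : ℝ} (he : e = 1 ∨ e = -1) (x : V n) :
    AbsPerm x (op i j e x) := by
  have hee : ∀ a, |e * a| = |a| := by intro a; rcases he with rfl | rfl <;> simp
  refine ⟨Equiv.swap i j, fun k => ?_⟩
  by_cases h1 : k = i
  · subst h1; rw [op_p, Equiv.swap_apply_left, hee]
  · by_cases h2 : k = j
    · subst h2; rw [op_q hij, Equiv.swap_apply_right, hee]
    · rw [op_o h1 h2, Equiv.swap_apply_of_ne_of_ne h1 h2]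

theorem absPerm_of_orb (hn : 2 ≤ n) {I : Finset (Fin n)} {x y : V n} (h : WIOrb n CType.D I x y) :
    AbsPerm x y := by
  induction h with
  | refl => exact ⟨Equiv.refl _, fun _ => rfl⟩
  | tail _ h ih =>
    obtain ⟨i, hi, rfl⟩ := h
    refine ih.trans ?_
    by_cases h : i.1 + 1 < n
    · have hne : i ≠ ⟨i.1+1, h⟩ := by intro h; have := congrArg Fin.val h; simp at this
      rw [alphaR_lt h, sRefl_rt _ hne (by simp)]
      exact absPerm_op hne (by simp) _
    · have hne : (⟨n-2, by omega⟩ : Fin n) ≠ i := by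
        intro h; have := congrArg Fin.val h; simp at this; omega
      rw [alphaR_last h, sRefl_rt _ hne (by simp)]
      exact absPerm_op hne (by simp) _

theorem nsval_m (I : Finset (Fin n)) :
    nsval n CType.D I (mval n I) =
      (Finset.univ.filter (fun i : Fin n => InSeg n CType.D I (mval n I) i)).card := by
  unfold nsval InSeg
  rw [qv_m]
  set q := qv n CType.D I (mval n I - 1)
  have : (Finset.univ.filter (fun i : Fin n => q < i.1 + 1 ∧ i.1 + 1 ≤ n)).map Fin.valEmbedding
      = Finset.Ico q n := by
    ext k
    simp only [Finset.mem_map, Finset.mem_filter, Finset.mem_univ, true_and, Finset.mem_Ico,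
      Fin.valEmbedding_apply]
    constructor
    · rintro ⟨a, ⟨h1, h2⟩, rfl⟩; omega
    · rintro ⟨h1, h2⟩; exact ⟨⟨k, h2⟩, ⟨by simp; omega, by simp; omega⟩, rfl⟩
  have c := congrArg Finset.card this
  rw [Finset.card_map, Nat.card_Ico] at c
  rw [← c]
  congr

theorem Jtwo {J : Finset (Fin n)} {lbar : V n}
    (hJ : ∀ i : Fin n, i ∈ J ↔ JantzenBlocks.inn lbar (alphaR n CType.D i) = 0)
    (hA : 0 < aval n CType.D J lbar (mval n J - 1))
    (h1 : nsval n CType.D J (mval n J) ≠ 0) : 2 ≤ n := by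
  by_contra hn
  have hstd : StandardI n CType.D J := fun _ h => absurd h hn
  have hn : n = 0 ∨ n = 1 := by omega
  rcases hn with rfl | rfl
  · unfold aval at hA; simp at hA
  · have hm := mval_eq J
    by_cases h0 : (0 : Fin 1) ∈ J
    · have hc : (Finset.univ \ J) = ∅ := by
        ext j; simp [Subsingleton.elim j 0, h0]
      rw [hc] at hm
      simp at hm
      have e := (hJ 0).mp h0
      rw [alphaR_last (by simp), rt_neg, inn_add'] at e
      rw [hm] at hA
      unfold aval at hA
      rw [if_pos (by omega), qv_std hstd] at hA
      simp [qval] at hA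
      have e2 : (⟨0, by norm_num⟩ : Fin 1) = 0 := rfl
      simp only [Fin.isValue, Nat.reduceSub, e2] at e hA
      norm_num at e
      linarith
    · have hc : (Finset.univ \ J) = {0} := by
        ext j; simp [Subsingleton.elim j 0, h0]
      rw [hc] at hm
      simp at hm
      apply h1
      unfold nsval
      rw [qv_m, hm, qv_std hstd]
      have := (qval_lt J (s := 1) (by omega) (by omega) 0).mpr (by unfold cnt; simp)
      simp; omega

structure JData (J : Finset (Fin n)) (lbar : V n) : Prop where
  two : 2 ≤ n
  one : 1 < mval n J
  val : ∀ k, |lbar k| = aval n CType.D J lbar (sg J k)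
  surj : ∀ t, 1 ≤ t → t ≤ mval n J → ∃ k, sg J k = t
  anti : ∀ t t', 1 ≤ t → t < t' → t' ≤ mval n J →
    aval n CType.D J lbar t' < aval n CType.D J lbar t
  zero : aval n CType.D J lbar (mval n J) = 0
  card : nsval n CType.D J (mval n J) = (Finset.univ.filter (fun k => sg J k = mval n J)).card

theorem jdata {J : Finset (Fin n)} {lbar : V n} (hdom : DominantW n CType.D lbar)
    (hJ : ∀ i : Fin n, i ∈ J ↔ JantzenBlocks.inn lbar (alphaR n CType.D i) = 0)
    (hA : 0 < aval n CType.D J lbar (mval n J - 1))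
    (h1 : nsval n CType.D J (mval n J) ≠ 0) : JData J lbar := by
  have hn := Jtwo hJ hA h1
  have hstd : StandardI n CType.D J := by
    by_contra h
    apply h1
    have e : qv n CType.D J (mval n J - 1) = n := by unfold qv; rw [if_pos ⟨h, rfl⟩]
    unfold nsval
    rw [qv_m, e, Nat.sub_self]
  have hm1 : 1 ≤ mval n J := by rw [mval_eq]; omega
  have hlast : sg J ⟨n-1, by omega⟩ = mval n J := by
    rw [← inSeg_std hstd _ hm1 le_rfl]
    unfold nsval at h1
    rw [qv_m] at h1
    unfold InSeg
    rw [qv_m]; simp; omega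
  -- monotonicity
  have dec : ∀ (d : ℕ) (i j : Fin n), j.1 = i.1 + d →
      lbar j ≤ lbar i ∧ (sg J i < sg J j → lbar j < lbar i) ∧ (sg J i = sg J j → lbar i = lbar j) := by
    intro d
    induction d with
    | zero => intro i j h; rw [show j = i from Fin.ext (by omega)]; simp
    | succ d ih =>
      intro i j h
      have hlt : i.1 + 1 < n := by have := j.2; omega
      have a1 := sg_mono J (i := i) (j := ⟨i.1+1, hlt⟩) (by simp)
      have a2 := sg_mono J (i := ⟨i.1+1, hlt⟩) (j := j) (by simp; omega)
      obtain ⟨b1, b2, b3⟩ := ih ⟨i.1+1, hlt⟩ j (by simp; omega)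
      have a5 := hdom i
      have a6 := hJ i
      rw [alphaR_lt hlt, rt_one, inn_sub'] at a5 a6
      have a7 := sg_succ J hlt
      rw [a6] at a7
      refine ⟨by linarith, fun hs => ?_, fun hs => ?_⟩
      · by_cases hc : sg J ⟨i.1+1, hlt⟩ = sg J i
        · have := b2 (by omega); linarith
        · have : lbar i - lbar ⟨i.1+1, hlt⟩ ≠ 0 := fun h => hc (a7.mpr h)
          have : 0 < lbar i - lbar ⟨i.1+1, hlt⟩ := lt_of_le_of_ne a5 this.symm
          linarith
      · have c1 := b3 (by omega)
        have c2 := a7.mp (by omega)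
        linarith
  have same : ∀ i j, sg J i = sg J j → lbar i = lbar j := by
    intro i j h
    rcases le_total i.1 j.1 with hh | hh
    · exact (dec (j.1 - i.1) i j (by omega)).2.2 h
    · exact ((dec (i.1 - j.1) j i (by omega)).2.2 h.symm).symm
  have strict : ∀ i j, sg J i < sg J j → lbar j < lbar i := by
    intro i j h
    rcases le_total i.1 j.1 with hh | hh
    · exact (dec (j.1 - i.1) i j (by omega)).2.1 h
    · have := sg_mono J hh; omega
  have hz : ∀ k, sg J k = mval n J → lbar k = 0 := by
    intro k hk
    obtain ⟨c1, c2, c3, c4⟩ := std_last hn hstd hk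
    have e := (hJ _).mp c3
    rw [alphaR_last (by simp; omega), rt_neg, inn_add'] at e
    have e1 := same k _ (hk.trans c1.symm)
    have e2 := same k _ (hk.trans c2.symm)
    linarith
  have hnn : ∀ k, 0 ≤ lbar k := by
    intro k
    rcases Nat.lt_or_eq_of_le (sg_range J k).2 with h | h
    · rw [← hlast] at h
      have := strict _ _ h
      rw [hz _ hlast] at this
      exact this.le
    · rw [hz k h]
  have hone : 1 < mval n J := by
    by_contra hc
    have hm : mval n J = 1 := by omega
    rw [hm] at hA
    unfold aval at hA
    rw [if_pos (by omega)] at hA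
    split_ifs at hA with hh
    · have hs := sg_range J ⟨qv n CType.D J (1 - 1) - 1, hh⟩
      rw [hz _ (by omega)] at hA
      exact lt_irrefl _ hA
    · exact lt_irrefl _ hA
  have hzero : aval n CType.D J lbar (mval n J) = 0 := by
    unfold aval; rw [if_neg (lt_irrefl _)]
  have hav : ∀ t, 1 ≤ t → t ≤ mval n J → ∃ k, sg J k = t ∧ aval n CType.D J lbar t = lbar k := by
    intro t t1 t2
    rcases Nat.lt_or_eq_of_le t2 with t3 | t3
    · have p1 : 0 < qval n J t := (qval_lt J t1 t3 0).mpr (by unfold cnt; simp; omega)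
      have p2 : ¬ n < qval n J t := by rw [qval_lt J t1 t3 n, cnt_n]; omega
      have p3 : qval n J t - 1 < n := by omega
      have p4 : cnt J (qval n J t - 1) < t := (qval_lt J t1 t3 _).mp (by omega)
      have p5 : ¬ cnt J (qval n J t - 1 + 1) < t := by
        rw [← qval_lt J t1 t3]; omega
      have p6 := cnt_succ J ⟨qval n J t - 1, p3⟩
      refine ⟨⟨qval n J t - 1, p3⟩, ?_, ?_⟩
      · unfold sg
        simp only at p6 ⊢
        split_ifs at p6 <;> omega
      · unfold aval
        rw [if_pos t3]
        simp only [qv_std hstd]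
        rw [dif_pos p3]
    · exact ⟨⟨n-1, by omega⟩, by rw [hlast, t3], by rw [t3, hzero, hz _ hlast]⟩
  refine ⟨hn, hone, fun k => ?_, fun t t1 t2 => ?_, fun t t' t1 t2 t3 => ?_, hzero, ?_⟩
  · obtain ⟨c, hc1, hc2⟩ := hav (sg J k) (sg_range J k).1 (sg_range J k).2
    rw [hc2, abs_of_nonneg (hnn k)]
    exact same _ _ hc1.symm
  · obtain ⟨c, hc1, _⟩ := hav t t1 t2
    exact ⟨c, hc1⟩
  · obtain ⟨c, hc1, hc2⟩ := hav t t1 (by omega)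
    obtain ⟨c', hc1', hc2'⟩ := hav t' (by omega) t3
    rw [hc2, hc2']
    exact strict _ _ (by omega)
  · rw [nsval_m]
    congr 1
    ext k
    simp only [Finset.mem_filter, Finset.mem_univ, true_and]
    exact inSeg_std hstd _ hm1 le_rfl k

end Out7

section Out8

variable {n : ℕ} {seg : Fin n → ℕ} {m : ℕ}

noncomputable def NN (seg : Fin n → ℕ) (x : V n) (s : ℕ) (a : ℝ) : ℕ :=
  (Finset.univ.filter (fun i => seg i = s ∧ |x i| = a)).card

theorem abs_inj_m {y : V n} (hy : Reg seg m y) {i j : Fin n} (hi : seg i = m) (hj : seg j = m)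
    (h : |y i| = |y j|) : i = j := by
  by_contra hij
  exact single_m hy hj i hij (hi.trans hj.symm) h

/-- the comparison map for full pairs -/
theorem full_map {x y : V n} {i : Fin n} (h : ¬ room seg m x (seg i) |y i|) :
    ∃ j, seg j = seg i ∧ |x j| = |y i| ∧ (seg i ≠ m → x j = y i) := by
  unfold room at h
  push Not at h
  obtain ⟨h1, h2⟩ := h
  by_cases hm : seg i = m
  · obtain ⟨j, hj, hj'⟩ := h2 hm
    exact ⟨j, hj, hj', fun h => absurd hm h⟩
  · obtain ⟨j, hj, hj'⟩ := h1 hm (y i) rfl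
    exact ⟨j, hj, by rw [hj'], fun _ => hj'⟩

theorem full_inj {x y : V n} (hy : Reg seg m y) {f : Fin n → Fin n} {i j : Fin n}
    (hi : seg (f i) = seg i ∧ |x (f i)| = |y i| ∧ (seg i ≠ m → x (f i) = y i))
    (hj : seg (f j) = seg j ∧ |x (f j)| = |y j| ∧ (seg j ≠ m → x (f j) = y j))
    (h : f i = f j) : i = j := by
  have hs : seg i = seg j := by rw [← hi.1, h, hj.1]
  by_cases hm : seg i = m
  · exact abs_inj_m hy hm (hs ▸ hm) (by rw [← hi.2.1, h, hj.2.1])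
  · by_contra hij
    refine (hy i j hij hs).1 ?_
    rw [← hi.2.2 hm, h, hj.2.2 (hs ▸ hm)]

theorem NN_le {x y : V n} (hy : Reg seg m y) {s : ℕ} {a : ℝ} (h : ¬ room seg m x s a) :
    NN seg y s a ≤ NN seg x s a := by
  have hf : ∀ i, ∃ j, (seg i = s ∧ |y i| = a) →
      (seg j = seg i ∧ |x j| = |y i| ∧ (seg i ≠ m → x j = y i)) := by
    intro i
    by_cases hi : seg i = s ∧ |y i| = a
    · obtain ⟨j, hj⟩ := full_map (seg := seg) (m := m) (x := x) (y := y) (i := i) (by rw [hi.1, hi.2]; exact h)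
      exact ⟨j, fun _ => hj⟩
    · exact ⟨i, fun h => absurd h hi⟩
  choose f hf using hf
  apply Finset.card_le_card_of_injOn f
  · intro i hi
    have hi : seg i = s ∧ |y i| = a := by simpa using hi
    have := hf i hi
    simp [this.1, this.2.1, hi.1, hi.2]
  · intro i hi j hj hij
    have hi : seg i = s ∧ |y i| = a := by simpa using hi
    have hj : seg j = s ∧ |y j| = a := by simpa using hj
    exact full_inj hy (hf i hi) (hf j hj) hij

theorem card_perm {x y : V n} (h : AbsPerm x y) (B : ℝ → Prop) :
    (Finset.univ.filter (fun i => B |y i|)).card = (Finset.univ.filter (fun i => B |x i|)).card := by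
  obtain ⟨σ, h⟩ := h
  rw [← Finset.card_map σ.toEmbedding]
  congr 1
  ext k
  simp only [Finset.mem_map, Finset.mem_filter, Finset.mem_univ, true_and]
  constructor
  · rintro ⟨i, hi, rfl⟩; rw [h] at hi; exact hi
  · intro hk; exact ⟨σ.symm k, by rw [h]; simpa using hk, by simp⟩

theorem card_split (A B : Fin n → Prop) :
    (Finset.univ.filter (fun i => A i ∧ B i)).card + (Finset.univ.filter (fun i => A i ∧ ¬ B i)).card
      = (Finset.univ.filter A).card := by
  rw [← Finset.card_filter_add_card_filter_not (s := Finset.univ.filter A) B,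
    Finset.filter_filter, Finset.filter_filter]

theorem closed_transfer {x y : V n} (hy : Reg seg m y) (hp : AbsPerm x y)
    {P : ℕ → Prop} {Q : ℝ → Prop} (hc : Closed seg m x P Q) :
    (∀ s t, P s → ¬ Q t → NN seg x s t ≤ NN seg y s t) ∧
    (∀ i, Q |y i| → P (seg i)) := by
  have hf : ∀ i, ∃ j, (P (seg i) ∧ ¬ Q |y i|) →
      (seg j = seg i ∧ |x j| = |y i| ∧ (seg i ≠ m → x j = y i)) := by
    intro i
    by_cases hi : P (seg i) ∧ ¬ Q |y i|
    · obtain ⟨j, hj⟩ := full_map (seg := seg) (m := m) (x := x) (y := y) (i := i) (fun h => hi.2 (hc.1 _ _ hi.1 h))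
      exact ⟨j, fun _ => hj⟩
    · exact ⟨i, fun h => absurd h hi⟩
  choose f hf using hf
  have q := card_perm hp Q
  have a1 := card_split (fun i => P (seg i)) (fun i => Q |x i|)
  have a2 := card_split (fun i => P (seg i)) (fun i => Q |y i|)
  have b1 := card_split (fun i => Q |x i|) (fun i => P (seg i))
  have b2 := card_split (fun i => Q |y i|) (fun i => P (seg i))
  have z : (Finset.univ.filter (fun i => Q |x i| ∧ ¬ P (seg i))).card = 0 := by
    rw [Finset.card_eq_zero, Finset.filter_eq_empty_iff]
    rintro i _ ⟨h1, h2⟩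
    exact h2 (hc.2 (seg i) _ h1 ⟨i, rfl, rfl⟩)
  have c1 : (Finset.univ.filter (fun i => Q |x i| ∧ P (seg i))) =
      Finset.univ.filter (fun i => P (seg i) ∧ Q |x i|) := by
    ext i; simp [and_comm]
  have c2 : (Finset.univ.filter (fun i => Q |y i| ∧ P (seg i))) =
      Finset.univ.filter (fun i => P (seg i) ∧ Q |y i|) := by
    ext i; simp [and_comm]
  rw [c1] at b1
  rw [c2] at b2
  have maps : ∀ i ∈ Finset.univ.filter (fun i => P (seg i) ∧ ¬ Q |y i|),
      f i ∈ Finset.univ.filter (fun i => P (seg i) ∧ ¬ Q |x i|) := by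
    intro i hi
    have hi : P (seg i) ∧ ¬ Q |y i| := by simpa using hi
    have := hf i hi
    simp only [Finset.mem_filter, Finset.mem_univ, true_and, this.1, this.2.1]
    exact hi
  have inj : Set.InjOn f (Finset.univ.filter (fun i => P (seg i) ∧ ¬ Q |y i|) : Finset (Fin n)) := by
    intro i hi j hj hij
    have hi : P (seg i) ∧ ¬ Q |y i| := by simpa using hi
    have hj : P (seg j) ∧ ¬ Q |y j| := by simpa using hj
    exact full_inj hy (hf i hi) (hf j hj) hij
  have le := Finset.card_le_card_of_injOn f maps inj
  have z' : (Finset.univ.filter (fun i => Q |y i| ∧ ¬ P (seg i))).card = 0 := by omega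
  have surj := Finset.surjOn_of_injOn_of_card_le f maps inj (by omega)
  constructor
  · intro s t hs ht
    unfold NN
    apply Finset.card_le_card_of_surjOn f
    intro j hj
    have hj : seg j = s ∧ |x j| = t := by simpa using hj
    obtain ⟨i, hi, rfl⟩ := surj (show j ∈ _ by simp [hj.1, hj.2, hs, ht])
    have hi : P (seg i) ∧ ¬ Q |y i| := by simpa using hi
    have := hf i hi
    exact ⟨i, by simp [← this.1, ← this.2.1, hj.1, hj.2], rfl⟩
  · intro i hi
    by_contra hcon
    rw [Finset.card_eq_zero, Finset.filter_eq_empty_iff] at z'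
    exact z' (Finset.mem_univ i) ⟨hi, hcon⟩

end Out8

section Out9

variable {n : ℕ}

theorem sep_pair {I J I0 : Finset (Fin n)} {ψ : V n → V n} {lam lbar : V n}
    (hn : 2 ≤ n) (hJ : JData J lbar)
    (m1 : mval n I0 = mval n I)
    (m2 : ∀ s, 1 ≤ s → s ≤ mval n I → ∀ i, InSeg n CType.D I s i ↔ sg I0 i = s)
    (m3 : ∀ x i, |ψ x i| = |x i|)
    (m4 : ∀ x, RegI n CType.D I x → Reg (sg I0) (mval n I0) (ψ x))
    (m5 : ∀ x, LamIPlus n CType.D I x → Reg (sg I0) (mval n I0) (ψ x))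
    (horb : AbsPerm lbar lam)
    {P : ℕ → Prop} {Q : ℝ → Prop} (hc : Closed (sg I0) (mval n I0) (ψ lam) P Q)
    (hm : 1 < mval n I) (hPQ : P (mval n I) ↔ ¬ Q 0)
    (hS : ((Finset.Icc 1 (mval n I)).filter P).Nonempty)
    (hSb : ((Finset.Icc 1 (mval n J)).filter (fun t => ¬ Q (aval n CType.D J lbar t))).Nonempty) :
    ((Finset.Icc 1 (mval n I)).filter P,
      (Finset.Icc 1 (mval n J)).filter (fun t => ¬ Q (aval n CType.D J lbar t)))
      ∈ DSet n CType.D I J lbar := by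
  rintro x ⟨hx1, hx2⟩
  have hnsl : ∀ (y : V n) s a, 1 ≤ s → s ≤ mval n I →
      nsl n CType.D I y s a = NN (sg I0) (ψ y) s a := by
    intro y s a h1 h2
    unfold nsl NN
    congr 1
    ext i
    simp only [Finset.mem_filter, Finset.mem_univ, true_and, m2 s h1 h2, m3]
  have hp : AbsPerm (ψ lam) (ψ x) := by
    obtain ⟨σ, h⟩ := horb.symm.trans (absPerm_of_orb hn hx1)
    exact ⟨σ, fun k => by rw [m3, m3, h]⟩
  obtain ⟨t1, t2⟩ := closed_transfer (m5 x hx2) hp hc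
  refine ⟨hS, hSb, Finset.filter_subset _ _, Finset.filter_subset _ _, hm, hJ.one, ?_, ?_, ?_⟩
  · intro s hs t ht mu _ hmu
    simp only [Finset.mem_filter, Finset.mem_Icc] at hs ht
    rw [hnsl _ _ _ hs.1.1 hs.1.2, hnsl _ _ _ hs.1.1 hs.1.2]
    exact (NN_le (m4 mu hmu) (fun h => ht.2 (hc.1 _ _ hs.2 h))).trans (t1 s _ hs.2 ht.2)
  · intro s hs hs' t ht ht'
    simp only [Finset.mem_filter, Finset.mem_Icc] at hs hs' ht ht'
    rw [hnsl _ _ _ hs.1 hs.2]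
    unfold NN
    rw [Finset.card_eq_zero, Finset.filter_eq_empty_iff]
    rintro i _ ⟨h1, h2⟩
    apply hs'
    refine ⟨hs, ?_⟩
    rw [← h1]
    apply t2
    rw [h2]
    by_contra h
    exact ht' ⟨ht, h⟩
  · simp only [Finset.mem_filter, Finset.mem_Icc, hJ.zero]
    have := hJ.one
    constructor
    · rintro ⟨_, h⟩; exact ⟨⟨by omega, le_rfl⟩, hPQ.mp h⟩
    · rintro ⟨_, h⟩; exact ⟨⟨by omega, le_rfl⟩, hPQ.mpr h⟩

end Out9
/-- Proposition 5.7 / `ssprop2`. -/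
theorem statement5 (n : ℕ) (I J : Finset (Fin n)) (lam lbar : V n)
    (hint : IntegralW n CType.D lam) (hreg : RegI n CType.D I lam)
    (horb : WOrb n CType.D lam lbar) (hdom : DominantW n CType.D lbar)
    (hJ : ∀ i : Fin n, i ∈ J ↔ inn lbar (alphaR n CType.D i) = 0)
    (hA : 0 < aval n CType.D J lbar (mval n J - 1))
    (i : Fin n) (hregi : RegI n CType.D I (sRefl (ee i) lam))
    (hnc : ¬ Conn n CType.D I lam (sRefl (ee i) lam))
    (h1 : nsval n CType.D J (mval n J) ≠ 0)
    (h2 : ¬ (nsval n CType.D I (mval n I) = mval n J ∧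
             nsval n CType.D J (mval n J) = mval n I)) :
    StronglySepSys n CType.D I J lbar := by
  have jd := jdata hdom hJ hA h1
  have hn := jd.two
  obtain ⟨I0, ψ, hstd, m1, m2, m3, m4, m5, m6, m7⟩ := model hn I
  by_contra hS
  apply hnc
  rw [sRefl_ee] at hregi ⊢
  by_cases h0 : lam i = 0
  · rw [flip_zero i lam h0]
    exact ⟨hreg, hreg, Relation.ReflTransGen.refl⟩
  apply m7
  rw [m6]
  have hx := m4 lam hreg
  have hx' := m4 _ hregi
  rw [m6] at hx'
  have z : ∀ k, ψ lam k = 0 ↔ lam k = 0 := by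
    intro k; rw [← abs_eq_zero, m3, abs_eq_zero]
  have h0' : ψ lam i ≠ 0 := fun h => h0 ((z i).mp h)
  have horb' : AbsPerm lbar lam := (absPerm_of_orb hn horb).symm
  have hσ : ∃ σ : Equiv.Perm (Fin n), ∀ k, |ψ lam k| = aval n CType.D J lbar (sg J (σ k)) := by
    obtain ⟨σ, h⟩ := horb'
    exact ⟨σ, fun k => by rw [m3, h, jd.val]⟩
  obtain ⟨σ, hσ⟩ := hσ
  have hrng := sg_range I0
  have hinj : ∀ t t', 1 ≤ t → t ≤ mval n J → 1 ≤ t' → t' ≤ mval n J →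
      aval n CType.D J lbar t = aval n CType.D J lbar t' → t = t' := by
    intro t t' a b c d h
    rcases lt_trichotomy t t' with g | g | g
    · have := jd.anti t t' a g d; linarith
    · exact g
    · have := jd.anti t' t c g b; linarith
  have hsg := sg_range J
  have hone := jd.one
  refine (core (moves hn hstd) hx h0' (single_of_reg_flip hx hx' h0') ?_ ?_ hrng ?_).1
  · intro P Q hc hP hQ
    by_contra hcon
    obtain ⟨k, hk⟩ := jd.surj (mval n J) (by omega) le_rfl
    have hzk : |ψ lam (σ.symm k)| = 0 := by rw [hσ]; simp [hk, jd.zero]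
    have hPs := hc.2 (sg I0 (σ.symm k)) 0 hQ ⟨_, rfl, hzk⟩
    have hr := hrng (σ.symm k)
    have hne : sg I0 (σ.symm k) ≠ mval n I0 := fun h => hP (h ▸ hPs)
    apply hS
    refine ⟨_, sep_pair hn jd m1 m2 m3 m4 m5 horb' hc (by omega) ?_ ?_ ?_, ?_⟩
    · rw [← m1]; exact ⟨fun h => absurd h hP, fun h => absurd hQ h⟩
    · refine ⟨sg I0 (σ.symm k), ?_⟩
      simp only [Finset.mem_filter, Finset.mem_Icc]
      exact ⟨⟨hr.1, by omega⟩, hPs⟩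
    · refine ⟨sg J (σ i), ?_⟩
      simp only [Finset.mem_filter, Finset.mem_Icc]
      exact ⟨hsg _, by rw [← hσ]; exact hcon⟩
    · rintro (h | h | h | h)
      · have := congrArg Prod.snd h
        have h3 : mval n J ∈ ({mval n J} : Finset ℕ) := by simp
        simp only at this
        rw [← this, Finset.mem_filter, jd.zero] at h3
        exact h3.2 hQ
      · have := congrArg Prod.snd h
        have h3 : mval n J ∈ ({mval n J} : Finset ℕ) := by simp
        simp only at this
        rw [← this, Finset.mem_filter, jd.zero] at h3
        exact h3.2 hQ
      · have := congrArg Prod.fst h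
        have h3 : mval n I ∈ ({mval n I} : Finset ℕ) := by simp
        simp only at this
        rw [← this, Finset.mem_filter] at h3
        exact hP (m1 ▸ h3.2)
      · have := congrArg Prod.fst h
        have h3 : mval n I ∈ ({mval n I} : Finset ℕ) := by simp
        simp only at this
        rw [← this, Finset.mem_filter] at h3
        exact hP (m1 ▸ h3.2)
  · intro P Q hc hP hQ hi
    have hr := hrng i
    have memS : mval n I ∈ (Finset.Icc 1 (mval n I)).filter P := by
      simp only [Finset.mem_filter, Finset.mem_Icc]
      exact ⟨⟨by omega, le_rfl⟩, m1 ▸ hP⟩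
    have memSb : mval n J ∈
        (Finset.Icc 1 (mval n J)).filter (fun t => ¬ Q (aval n CType.D J lbar t)) := by
      simp only [Finset.mem_filter, Finset.mem_Icc, jd.zero]
      exact ⟨⟨by omega, le_rfl⟩, hQ⟩
    have hD := sep_pair hn jd m1 m2 m3 m4 m5 horb' hc (by omega)
      (by rw [← m1]; exact ⟨fun _ => hQ, fun _ => hP⟩) ⟨_, memS⟩ ⟨_, memSb⟩
    have hweak : IsWeakPair n I J ((Finset.Icc 1 (mval n I)).filter P, (Finset.Icc 1 (mval n J)).filter (fun t => ¬ Q (aval n CType.D J lbar t))) := by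
      by_contra hw
      exact hS ⟨_, hD, hw⟩
    rcases hweak with h | h | h | h
    · have := congrArg Prod.fst h
      simp only at this
      rw [this, Finset.mem_Icc] at memS
      omega
    · right
      have e1 := congrArg Prod.fst h
      have e2 := congrArg Prod.snd h
      simp only at e1 e2
      constructor
      · intro s s1 s2
        have : s ∈ Finset.Icc 1 (mval n I) := by simp; omega
        rw [← e1, Finset.mem_filter] at this
        exact this.2
      · intro j hj
        by_contra hq
        have : sg J (σ j) ∈ ({mval n J} : Finset ℕ) := by
          rw [← e2, Finset.mem_filter, Finset.mem_Icc, ← hσ]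
          exact ⟨hsg _, hq⟩
        rw [Finset.mem_singleton] at this
        apply hj
        rw [← abs_eq_zero, hσ, this, jd.zero]
    · have := congrArg Prod.snd h
      simp only at this
      rw [this, Finset.mem_Icc] at memSb
      omega
    · left
      have e1 := congrArg Prod.fst h
      have e2 := congrArg Prod.snd h
      simp only at e1 e2
      constructor
      · intro s s1 s2 hs
        have : s ∈ ({mval n I} : Finset ℕ) := by
          rw [← e1, Finset.mem_filter, Finset.mem_Icc]
          exact ⟨⟨s1, by omega⟩, hs⟩
        rw [Finset.mem_singleton] at this
        omega
      · intro j
        have : sg J (σ j) ∈ Finset.Icc 1 (mval n J) := Finset.mem_Icc.mpr (hsg _)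
        rw [← e2, Finset.mem_filter, ← hσ] at this
        exact this.2
  · rintro hi ⟨g1, g2⟩
    apply h2
    constructor
    · rw [nsval_m]
      have e : (Finset.univ.filter (fun k : Fin n => InSeg n CType.D I (mval n I) k)) =
          Finset.univ.filter (fun k => sg I0 k = mval n I0) := by
        have := hrng i
        ext k
        simp only [Finset.mem_filter, Finset.mem_univ, true_and]
        rw [m2 _ (by omega) le_rfl, m1]
      rw [e]
      have : (Finset.univ.filter (fun k => sg I0 k = mval n I0)).image (fun k => sg J (σ k)) =
          Finset.Icc 1 (mval n J) := by
        ext t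
        simp only [Finset.mem_image, Finset.mem_filter, Finset.mem_univ, true_and, Finset.mem_Icc]
        constructor
        · rintro ⟨k, _, rfl⟩; exact hsg _
        · rintro ⟨t1, t2⟩
          obtain ⟨k, hk⟩ := jd.surj t t1 t2
          obtain ⟨a, ha, ha'⟩ := g2 (σ.symm k)
          refine ⟨a, ha, ?_⟩
          rw [hσ, hσ] at ha'
          simp only [Equiv.apply_symm_apply, hk] at ha'
          exact hinj _ _ (hsg _).1 (hsg _).2 t1 t2 ha'
      have c := congrArg Finset.card this
      rw [Finset.card_image_of_injOn, Nat.card_Icc] at c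
      · omega
      · intro a ha b hb hab
        have ha : sg I0 a = mval n I0 := by simpa using ha
        have hb : sg I0 b = mval n I0 := by simpa using hb
        refine abs_inj_m hx ha hb ?_
        rw [hσ, hσ]
        simp only at hab
        rw [hab]
    · rw [jd.card]
      have c1 : (Finset.univ.filter (fun k => sg J k = mval n J)).card =
          (Finset.univ.filter (fun k => ψ lam k = 0)).card := by
        rw [← Finset.card_map σ.toEmbedding (s := Finset.univ.filter (fun k => ψ lam k = 0))]
        congr 1
        ext k
        simp only [Finset.mem_map, Finset.mem_filter, Finset.mem_univ, true_and]
        constructor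
        · intro hk
          refine ⟨σ.symm k, ?_, by simp⟩
          rw [← abs_eq_zero, hσ]; simp [hk, jd.zero]
        · rintro ⟨a, ha, rfl⟩
          rw [← abs_eq_zero, hσ, ← jd.zero] at ha
          exact hinj _ _ (hsg _).1 (hsg _).2 (by omega) le_rfl ha
      rw [c1]
      have : (Finset.univ.filter (fun k => ψ lam k = 0)).image (sg I0) =
          Finset.Icc 1 (mval n I0) := by
        ext s
        simp only [Finset.mem_image, Finset.mem_filter, Finset.mem_univ, true_and, Finset.mem_Icc]
        constructor
        · rintro ⟨k, _, rfl⟩; exact hrng _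
        · rintro ⟨s1, s2⟩
          obtain ⟨a, ha, ha'⟩ := g1 s s1 s2
          exact ⟨a, abs_eq_zero.mp ha', ha⟩
      have c := congrArg Finset.card this
      rw [Finset.card_image_of_injOn, Nat.card_Icc] at c
      · omega
      · intro a ha b hb hab
        have ha : ψ lam a = 0 := by simpa using ha
        have hb : ψ lam b = 0 := by simpa using hb
        by_contra hne
        exact (hx a b hne hab).1 (by rw [ha, hb])

end JantzenBlocks
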